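/- arXiv:1901.08839 — 2 statements merged into one kernel-verified Lean document; each statement's English description precedes it below -/
import Mathlib

section
/- There exists a universal constant C > 0 such that the following holds. Let n ∈ ℕ, let 0 < p ≤ 1/2 with pn ∈ ℤ, let k ∈ ℕ, and let f : S(n,p) → ℝ be of degree ≤ k. Then E_x[f(x)^8] ≤ p^{−Ck} · (E_x[f(x)²])^4, where x is uniform on S(n,p). -/
open Finset
open scoped Classical

/-- A point of the slice `S(n,p)`: a Boolean vector whose number of ones equals `p * n`. -/
abbrev SlicePoint (n : ℕ) (p : ℝ) : Type :=
  {x : Fin n → Bool // ((Finset.univ.filter (fun i => x i = true)).card : ℝ) = p * n}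

variable {n : ℕ} {p : ℝ}

/-- Expectation with respect to the uniform measure on the slice. -/
noncomputable def sExp (f : SlicePoint n p → ℝ) : ℝ :=
  (∑ x : SlicePoint n p, f x) / (Fintype.card (SlicePoint n p) : ℝ)

/-- The inner product `⟨f,g⟩ = E_x [f x * g x]` on functions on the slice. -/
noncomputable def sInner (f g : SlicePoint n p → ℝ) : ℝ :=
  sExp (fun x => f x * g x)

/-- `‖f‖₂² = E_x [f x ^ 2]`. -/
noncomputable def sNormSq (f : SlicePoint n p → ℝ) : ℝ := sInner f f

/-- `‖f‖₂`. -/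
noncomputable def sNorm (f : SlicePoint n p → ℝ) : ℝ := Real.sqrt (sNormSq f)

/-- The `i`-th coordinate of a slice point, viewed as a real number in `{0,1}`. -/
def coordR (x : SlicePoint n p) (i : Fin n) : ℝ := if x.1 i then 1 else 0

/-- `AND_T (x) = ∏_{i ∈ T} x_i`. -/
def andT (T : Finset (Fin n)) : SlicePoint n p → ℝ := fun x => ∏ i ∈ T, coordR x i

/-- The space `L_k` of functions of degree at most `k` on the slice. -/
def degLE (n : ℕ) (p : ℝ) (k : ℕ) : Submodule ℝ (SlicePoint n p → ℝ) :=
  Submodule.span ℝ {g | ∃ T : Finset (Fin n), T.card ≤ k ∧ g = andT T}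

/-- The space `L_{k-1}` (i.e. spanned by `AND_T` with `|T| < k`). -/
def degLT (n : ℕ) (p : ℝ) (k : ℕ) : Submodule ℝ (SlicePoint n p → ℝ) :=
  Submodule.span ℝ {g | ∃ T : Finset (Fin n), T.card < k ∧ g = andT T}

/-- `fk` is the orthogonal projection `f^{≤ k}` of `f` onto `L_k`. -/
def IsLowProj (n : ℕ) (p : ℝ) (k : ℕ) (f fk : SlicePoint n p → ℝ) : Prop :=
  fk ∈ degLE n p k ∧ ∀ g ∈ degLE n p k, sInner (f - fk) g = 0

/-- `fk` is the orthogonal projection of `f` onto the span of `AND_T`, `|T| < k`. -/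
def IsLowProjLT (n : ℕ) (p : ℝ) (k : ℕ) (f fk : SlicePoint n p → ℝ) : Prop :=
  fk ∈ degLT n p k ∧ ∀ g ∈ degLT n p k, sInner (f - fk) g = 0

/-- `Pr_x [f x ≠ g x]` under the uniform measure on the slice. -/
noncomputable def probNe (f g : SlicePoint n p → ℝ) : ℝ :=
  sExp (fun x => if f x = g x then 0 else 1)

/-- The action of a permutation on a slice point: `(x^π)_{π i} = x_i`. -/
def permPt (π : Equiv.Perm (Fin n)) (x : SlicePoint n p) : SlicePoint n p :=
  ⟨fun i => x.1 (π.symm i), by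
    have h : (Finset.univ.filter (fun i => x.1 (π.symm i) = true)) =
        (Finset.univ.filter (fun i => x.1 i = true)).map π.toEmbedding := by
      ext i
      simp [Finset.mem_map_equiv]
    rw [h, Finset.card_map]
    exact x.2⟩

/-- The derivative operator `D_{ij} f = (f - f^{(ij)})/2`. -/
noncomputable def Dij (i j : Fin n) (f : SlicePoint n p → ℝ) : SlicePoint n p → ℝ :=
  fun x => (f x - f (permPt (Equiv.swap i j) x)) / 2

/-- The derivative operator `D_P` associated with a set `P` of pairs,
obtained by composing the `D_{ab}` for `(a,b) ∈ P` (these commute for tuples). -/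
noncomputable def DP (P : Finset (Fin n × Fin n)) (f : SlicePoint n p → ℝ) :
    SlicePoint n p → ℝ :=
  P.toList.foldr (fun q g => Dij q.1 q.2 g) f

/-- `P` is a `k`-tuple: `k` pairs `(a,b)` with `a < b`, all `2k` entries distinct. -/
def IsTuple {n : ℕ} (k : ℕ) (P : Finset (Fin n × Fin n)) : Prop :=
  P.card = k ∧ (∀ q ∈ P, q.1 < q.2) ∧
    ∀ q ∈ P, ∀ r ∈ P, q ≠ r →
      q.1 ≠ r.1 ∧ q.1 ≠ r.2 ∧ q.2 ≠ r.1 ∧ q.2 ≠ r.2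

/-- `P` is shifted: for every pair `(a,b) ∈ P`, every `a' ≤ a` occurs as an entry of `P`. -/
def IsShifted {n : ℕ} (P : Finset (Fin n × Fin n)) : Prop :=
  ∀ q ∈ P, ∀ a : Fin n, a ≤ q.1 → ∃ r ∈ P, r.1 = a ∨ r.2 = a

/-- `P` is sorted: `a_i < a_j ↔ b_i < b_j`. -/
def IsSorted {n : ℕ} (P : Finset (Fin n × Fin n)) : Prop :=
  ∀ q ∈ P, ∀ r ∈ P, (q.1 < r.1 ↔ q.2 < r.2)

/-- `Ψ_P (x) = ∏_{(a,b) ∈ P} (x_b - x_a)`. -/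
def PsiP (P : Finset (Fin n × Fin n)) : SlicePoint n p → ℝ :=
  fun x => ∏ q ∈ P, (coordR x q.2 - coordR x q.1)

/-- The slice Laplacian `L f = f - (1 / C(n,2)) ∑_{i<j} f^{(ij)}`. -/
noncomputable def sliceLap (f : SlicePoint n p → ℝ) : SlicePoint n p → ℝ :=
  fun x => f x -
    (∑ q ∈ Finset.univ.filter (fun q : Fin n × Fin n => q.1 < q.2),
      f (permPt (Equiv.swap q.1 q.2) x)) / (n.choose 2 : ℝ)

/-- The noise operator `H_t = exp (-t L) = ∑_l (-t)^l L^l / l!`. -/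
noncomputable def Ht (t : ℝ) (f : SlicePoint n p → ℝ) : SlicePoint n p → ℝ :=
  fun x => ∑' l : ℕ, ((-t) ^ l / (l.factorial : ℝ)) * (sliceLap^[l] f) x

/-- The averaging operator `E_I f (x) = E_{Q ∼ S_I} [f (x^Q)]`, averaging over a uniformly
random permutation of the coordinates in `I` (fixing the coordinates outside `I`). -/
noncomputable def avgI (I : Finset (Fin n)) (f : SlicePoint n p → ℝ) : SlicePoint n p → ℝ :=
  fun x => (∑ σ : {σ : Equiv.Perm (Fin n) // ∀ i ∉ I, σ i = i}, f (permPt σ.1 x)) /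
    (Fintype.card {σ : Equiv.Perm (Fin n) // ∀ i ∉ I, σ i = i} : ℝ)

/-- The conditional variance `V_I (f) = ‖f - E_I f‖₂²`. -/
noncomputable def condVar (I : Finset (Fin n)) (f : SlicePoint n p → ℝ) : ℝ :=
  sNormSq (f - avgI I f)

/-- Expectation with respect to the uniform measure on the discrete cube. -/
noncomputable def cExp {n : ℕ} (f : (Fin n → Bool) → ℝ) : ℝ :=
  (∑ x : Fin n → Bool, f x) / (2 ^ n : ℝ)

/-- The Fourier–Walsh coefficient `f̂ (S) = E_x [f x * χ_S x]`. -/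
noncomputable def walshCoeff {n : ℕ} (f : (Fin n → Bool) → ℝ) (S : Finset (Fin n)) : ℝ :=
  cExp (fun x => f x * ∏ i ∈ S, (if x i then (-1 : ℝ) else 1))

/-- The Fourier weight of `f` beyond degree `k`: `W^{>k} (f) = ∑_{|S| > k} f̂(S)²`. -/
noncomputable def WAbove {n : ℕ} (k : ℕ) (f : (Fin n → Bool) → ℝ) : ℝ :=
  ∑ S ∈ Finset.univ.filter (fun S : Finset (Fin n) => k < S.card), walshCoeff f S ^ 2

/-- `Pr_x [f x ≠ g x]` under the uniform measure on the cube. -/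
noncomputable def cProbNe {n : ℕ} (f g : (Fin n → Bool) → ℝ) : ℝ :=
  cExp (fun x => if f x = g x then 0 else 1)

/-- The action of a permutation on a point of the cube: `(x^π)_{π i} = x_i`. -/
def cPerm {n : ℕ} (π : Equiv.Perm (Fin n)) (x : Fin n → Bool) : Fin n → Bool :=
  fun i => x (π.symm i)

/-- The derivative operator on the cube. -/
noncomputable def cDij {n : ℕ} (i j : Fin n) (f : (Fin n → Bool) → ℝ) :
    (Fin n → Bool) → ℝ :=
  fun x => (f x - f (cPerm (Equiv.swap i j) x)) / 2

/-!
The uniform measure on the `m`-subsets of `V` satisfies a logarithmic Sobolev inequality for the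
exchange walk with constant proportional to `#V * binEntropy (m / #V)`. This goes by induction on
`#V`: conditioning on whether a random `i` belongs to the set splits the entropy into the entropies
of two smaller slices, handled by induction because `binEntropy` is concave, and the entropy of a
two-point space, handled by a scalar inequality and a coupling of the two slices.

The generator of the walk lowers the degree of `AND_T` up to a multiple of `AND_T` that depends
only on `#T`. Being symmetric, it acts by these scalars on successive orthogonal complements of the
degree filtration, which bounds the energy of a function `f` of degree `d` by a multiple of
`d * E[f ^ 2]`, and hence the entropy of `f ^ 2` by `O(d log (1 / p)) * E[f ^ 2]`. Such an entropy
bound alone gives `E[f ^ 2] ≤ p ^ (-O(d)) * E[|f|] ^ 2`, which is applied to `f ^ 2` and to `f ^ 4`.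
-/

open Real
open scoped BigOperators

section TwoPoint

lemma one_sub_sq_sub_negMulLog_sq_le {u K : ℝ} (hu : 0 ≤ u) (hK : 0 ≤ K) (hlog : log u ≤ K) :
    1 - u ^ 2 - negMulLog (u ^ 2) ≤ (3 + 2 * K) * (u - 1) ^ 2 := by
  rcases hu.eq_or_lt with rfl | hu
  · simp only [ne_eq, OfNat.ofNat_ne_zero, not_false_eq_true, zero_pow, negMulLog_zero]
    linarith
  have hlog_sub : log u ≤ u - 1 := log_le_sub_one_of_pos hu
  have hexpand : 1 - u ^ 2 - negMulLog (u ^ 2) = 1 - u ^ 2 + 2 * (u ^ 2 * log u) := by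
    rw [negMulLog, log_pow]
    push_cast
    ring
  rw [hexpand]
  rcases le_total u 1 with h | h
  · have : u ^ 2 * log u ≤ u ^ 2 * (u - 1) := by gcongr
    nlinarith [mul_nonneg (sq_nonneg (u - 1)) hK, mul_nonneg (sq_nonneg (u - 1)) (sub_nonneg.2 h)]
  · have hlin : (2 * u - 1) * log u ≤ (2 * u - 1) * (u - 1) :=
      mul_le_mul_of_nonneg_left hlog_sub (by linarith)
    have hquad : (u - 1) ^ 2 * log u ≤ (u - 1) ^ 2 * K := by gcongr
    linarith

lemma log_le_neg_log_of_mul_le_one {c x : ℝ} (hc : 0 < c) (hc1 : c ≤ 1) (hx : 0 ≤ x)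
    (h : c * x ≤ 1) : log x ≤ -log c := by
  rcases hx.eq_or_lt with rfl | hx
  · simpa using log_nonpos hc.le hc1
  · have := log_nonpos (by positivity) h
    rw [log_mul hc.ne' hx.ne'] at this
    linarith

lemma weighted_log_le_binEntropy {p : ℝ} (hp : 0 < p) (hp1 : p < 1) :
    p * (1 - p) ^ 2 * (3 + 2 * -log p) + (1 - p) * p ^ 2 * (3 + 2 * -log (1 - p)) ≤
      4 * binEntropy p := by
  have hq : 0 < 1 - p := sub_pos.2 hp1
  have hX : 1 - p ≤ -log p := by linarith [log_le_sub_one_of_pos hp]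
  have hY : p ≤ -log (1 - p) := by linarith [log_le_sub_one_of_pos hq]
  have hpX : p * (1 - p) ≤ p * -log p := by gcongr
  have hqY : (1 - p) * p ≤ (1 - p) * -log (1 - p) := by gcongr
  have hp2X : (1 - p) ^ 2 * (p * -log p) ≤ p * -log p :=
    mul_le_of_le_one_left (by nlinarith) (pow_le_one₀ hq.le (by linarith))
  have hq2Y : p ^ 2 * ((1 - p) * -log (1 - p)) ≤ (1 - p) * -log (1 - p) :=
    mul_le_of_le_one_left (by nlinarith) (pow_le_one₀ hp.le hp1.le)
  rw [binEntropy, log_inv, log_inv]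
  nlinarith

lemma two_point_entropy_le_of_mean_eq_one {p a b : ℝ} (hp : 0 < p) (hp1 : p < 1) (ha : 0 ≤ a)
    (hb : 0 ≤ b) (hmean : p * a + (1 - p) * b = 1) :
    negMulLog (p * a ^ 2 + (1 - p) * b ^ 2) - p * negMulLog (a ^ 2) - (1 - p) * negMulLog (b ^ 2)
      ≤ 4 * binEntropy p * (a - b) ^ 2 := by
  have hq : 0 < 1 - p := sub_pos.2 hp1
  have hterm : ∀ {c x : ℝ}, 0 < c → c ≤ 1 → 0 ≤ x → c * x ≤ 1 →
      1 - x ^ 2 - negMulLog (x ^ 2) ≤ (3 + 2 * -log c) * (x - 1) ^ 2 := fun hc hc1 hx h =>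
    one_sub_sq_sub_negMulLog_sq_le hx (neg_nonneg.2 (log_nonpos hc.le hc1))
      (log_le_neg_log_of_mul_le_one hc hc1 hx h)
  have hA := hterm hp hp1.le ha (by nlinarith)
  have hB := hterm hq (by linarith) hb (by nlinarith)
  have ha1 : a - 1 = (1 - p) * (a - b) := by linarith
  have hb1 : b - 1 = -(p * (a - b)) := by linarith
  rw [ha1] at hA
  rw [hb1] at hB
  calc negMulLog (p * a ^ 2 + (1 - p) * b ^ 2) - p * negMulLog (a ^ 2)
        - (1 - p) * negMulLog (b ^ 2)
      ≤ 1 - (p * a ^ 2 + (1 - p) * b ^ 2) - p * negMulLog (a ^ 2)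
        - (1 - p) * negMulLog (b ^ 2) := by
        gcongr
        exact negMulLog_le_one_sub_self (by positivity)
    _ = p * (1 - a ^ 2 - negMulLog (a ^ 2)) + (1 - p) * (1 - b ^ 2 - negMulLog (b ^ 2)) := by ring
    _ ≤ p * ((3 + 2 * -log p) * ((1 - p) * (a - b)) ^ 2)
        + (1 - p) * ((3 + 2 * -log (1 - p)) * (-(p * (a - b))) ^ 2) := by gcongr
    _ = (p * (1 - p) ^ 2 * (3 + 2 * -log p) + (1 - p) * p ^ 2 * (3 + 2 * -log (1 - p)))
        * (a - b) ^ 2 := by ring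
    _ ≤ 4 * binEntropy p * (a - b) ^ 2 := by
        gcongr
        exact weighted_log_le_binEntropy hp hp1

lemma two_point_entropy_mul (M p u v : ℝ) :
    negMulLog (p * (M * u) ^ 2 + (1 - p) * (M * v) ^ 2) - p * negMulLog ((M * u) ^ 2)
        - (1 - p) * negMulLog ((M * v) ^ 2)
      = M ^ 2 * (negMulLog (p * u ^ 2 + (1 - p) * v ^ 2) - p * negMulLog (u ^ 2)
        - (1 - p) * negMulLog (v ^ 2)) := by
  have hfactor : p * (M * u) ^ 2 + (1 - p) * (M * v) ^ 2
      = M ^ 2 * (p * u ^ 2 + (1 - p) * v ^ 2) := by ring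
  rw [hfactor, mul_pow, mul_pow, negMulLog_mul, negMulLog_mul, negMulLog_mul]
  ring

theorem two_point_entropy_le {p a b : ℝ} (hp : 0 < p) (hp1 : p < 1) (ha : 0 ≤ a) (hb : 0 ≤ b) :
    negMulLog (p * a ^ 2 + (1 - p) * b ^ 2) - p * negMulLog (a ^ 2) - (1 - p) * negMulLog (b ^ 2)
      ≤ 4 * binEntropy p * (a - b) ^ 2 := by
  have hpa : 0 ≤ p * a := mul_nonneg hp.le ha
  have hqb : 0 ≤ (1 - p) * b := mul_nonneg (sub_nonneg.2 hp1.le) hb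
  rcases (add_nonneg hpa hqb).eq_or_lt with hM | hM
  · have ha0 : a = 0 := by nlinarith
    have hb0 : b = 0 := by nlinarith
    simp [ha0, hb0]
  obtain ⟨M, hMdef⟩ : ∃ M, M = p * a + (1 - p) * b := ⟨_, rfl⟩
  rw [← hMdef] at hM
  obtain ⟨u, rfl⟩ : ∃ u, a = M * u := ⟨a / M, (mul_div_cancel₀ a hM.ne').symm⟩
  obtain ⟨v, rfl⟩ : ∃ v, b = M * v := ⟨b / M, (mul_div_cancel₀ b hM.ne').symm⟩
  have hmean : p * u + (1 - p) * v = 1 := mul_left_cancel₀ hM.ne' (by linarith)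
  calc _ = M ^ 2 * (negMulLog (p * u ^ 2 + (1 - p) * v ^ 2) - p * negMulLog (u ^ 2)
        - (1 - p) * negMulLog (v ^ 2)) := two_point_entropy_mul M p u v
    _ ≤ M ^ 2 * (4 * binEntropy p * (u - v) ^ 2) := by
        gcongr
        exact two_point_entropy_le_of_mean_eq_one hp hp1 (nonneg_of_mul_nonneg_right ha hM)
          (nonneg_of_mul_nonneg_right hb hM) hmean
    _ = 4 * binEntropy p * (M * u - M * v) ^ 2 := by ring

lemma binEntropy_le_mul_neg_log {p : ℝ} (hp : 0 < p) (hp2 : p ≤ 1 / 2) :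
    binEntropy p ≤ 5 * (p * (1 - p) * -log p) := by
  have hq : 0 < 1 - p := by linarith
  have hlog : 2 / 3 ≤ -log p := by
    have := log_le_log hp hp2
    rw [one_div, log_inv] at this
    linarith [log_two_gt_d9]
  have hlog_q : (1 - p) * -log (1 - p) ≤ p := by
    linarith [self_sub_one_le_mul_log hq.le]
  have hp_le : p * (2 / 3) ≤ p * -log p := by gcongr
  have hhalf : 1 / 2 * (p * -log p) ≤ (1 - p) * (p * -log p) :=
    mul_le_mul_of_nonneg_right (by linarith) (by linarith)
  rw [binEntropy, log_inv, log_inv]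
  linarith

end TwoPoint

section Expectation

variable {ι κ : Type*}

lemma expect_sigma_of_card_eq {s : Finset ι} {t : ι → Finset κ} {c : ℕ}
    (ht : ∀ i ∈ s, #(t i) = c) (f : ι → κ → ℝ) :
    𝔼 q ∈ s.sigma t, f q.1 q.2 = 𝔼 i ∈ s, 𝔼 j ∈ t i, f i j := by
  have hinner : ∀ i ∈ s, 𝔼 j ∈ t i, f i j = (∑ j ∈ t i, f i j) / c := fun i hi => by
    rw [expect_eq_sum_div_card, ht i hi]
  rw [expect_congr rfl hinner, expect_eq_sum_div_card, expect_eq_sum_div_card, sum_sigma,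
    card_sigma, sum_congr rfl ht, sum_const, smul_eq_mul, ← sum_div, div_div, mul_comm,
    Nat.cast_mul]

lemma expect_comm_of_card_eq {s : Finset ι} {t : ι → Finset κ} {s' : κ → Finset ι} {t' : Finset κ}
    {c c' : ℕ} (h : ∀ i j, i ∈ s ∧ j ∈ t i ↔ i ∈ s' j ∧ j ∈ t') (ht : ∀ i ∈ s, #(t i) = c)
    (hs' : ∀ j ∈ t', #(s' j) = c') (f : ι → κ → ℝ) :
    𝔼 i ∈ s, 𝔼 j ∈ t i, f i j = 𝔼 j ∈ t', 𝔼 i ∈ s' j, f i j := by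
  rw [← expect_sigma_of_card_eq ht, ← expect_sigma_of_card_eq hs' fun j i => f i j]
  exact expect_nbij' (fun q => ⟨q.2, q.1⟩) (fun q => ⟨q.2, q.1⟩)
    (fun q hq => mem_sigma.2 ((h _ _).1 (mem_sigma.1 hq)).symm)
    (fun q hq => mem_sigma.2 ((h _ _).2 (mem_sigma.1 hq).symm))
    (fun _ _ => rfl) (fun _ _ => rfl) fun _ _ => rfl

lemma expect_expect_erase_le [DecidableEq ι] {s : Finset ι} {g : ι → ℝ} (hg : ∀ i ∈ s, 0 ≤ g i) :
    𝔼 i ∈ s, 𝔼 j ∈ s.erase i, g j ≤ 𝔼 j ∈ s, g j := by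
  rw [expect_comm_of_card_eq (s' := fun j => s.erase j) (t' := s)
    (fun i j => by simp only [mem_erase]; tauto) (fun i hi => card_erase_of_mem hi)
    (fun j hj => card_erase_of_mem hj)]
  refine expect_le_expect fun j hj => ?_
  rcases (s.erase j).eq_empty_or_nonempty with h | h
  · rw [h, expect_empty]
    exact hg j hj
  · rw [expect_const h]

lemma sqrt_expect_sub_sqrt_expect_sq_le (s : Finset ι) (u v : ι → ℝ) :
    (√(𝔼 i ∈ s, u i ^ 2) - √(𝔼 i ∈ s, v i ^ 2)) ^ 2 ≤ 𝔼 i ∈ s, (u i - v i) ^ 2 := by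
  have hu : 0 ≤ 𝔼 i ∈ s, u i ^ 2 := expect_nonneg fun _ _ => sq_nonneg _
  have hv : 0 ≤ 𝔼 i ∈ s, v i ^ 2 := expect_nonneg fun _ _ => sq_nonneg _
  have hcauchy : 𝔼 i ∈ s, u i * v i ≤ √(𝔼 i ∈ s, u i ^ 2) * √(𝔼 i ∈ s, v i ^ 2) := by
    rw [← sqrt_mul hu]
    exact le_sqrt_of_sq_le (expect_mul_sq_le_sq_mul_sq s u v)
  have hexpand : 𝔼 i ∈ s, (u i - v i) ^ 2
      = 𝔼 i ∈ s, u i ^ 2 + 𝔼 i ∈ s, v i ^ 2 - 2 * 𝔼 i ∈ s, u i * v i := by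
    rw [mul_expect, ← expect_add_distrib, ← expect_sub_distrib]
    exact expect_congr rfl fun i _ => by ring
  rw [hexpand, sub_sq, sq_sqrt hu, sq_sqrt hv]
  linarith

end Expectation

section PowersetCard

variable {α : Type*} [DecidableEq α]

lemma mem_powersetCard_erase {V y : Finset α} {i : α} {k : ℕ} :
    y ∈ powersetCard k (V.erase i) ↔ y ∈ powersetCard k V ∧ i ∉ y := by
  rw [mem_powersetCard, mem_powersetCard, subset_erase]
  tauto

lemma expect_expect_powersetCard_erase (V : Finset α) (k : ℕ) (K : α → Finset α → ℝ) :
    𝔼 i ∈ V, 𝔼 y ∈ powersetCard k (V.erase i), K i y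
      = 𝔼 x ∈ powersetCard k V, 𝔼 i ∈ V \ x, K i x := by
  refine expect_comm_of_card_eq (c := (#V - 1).choose k) (c' := #V - k) (fun i y => ?_)
    (fun i hi => ?_) (fun x hx => ?_) K
  · rw [mem_powersetCard_erase, mem_sdiff]
    tauto
  · rw [card_powersetCard, card_erase_of_mem hi]
  · rw [card_sdiff_of_subset (mem_powersetCard.1 hx).1, (mem_powersetCard.1 hx).2]

lemma expect_expect_powersetCard_insert (V : Finset α) (k : ℕ) (K : α → Finset α → ℝ) :
    𝔼 i ∈ V, 𝔼 y ∈ powersetCard k (V.erase i), K i (insert i y)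
      = 𝔼 x ∈ powersetCard (k + 1) V, 𝔼 i ∈ x, K i x := by
  rw [← expect_sigma_of_card_eq (c := (#V - 1).choose k) (fun i hi => by
      rw [card_powersetCard, card_erase_of_mem hi]) fun i y => K i (insert i y),
    ← expect_sigma_of_card_eq (fun x hx => (mem_powersetCard.1 hx).2) fun x i => K i x]
  refine expect_nbij' (fun q => ⟨insert q.1 q.2, q.1⟩) (fun q => ⟨q.2, q.1.erase q.2⟩)
    (fun q hq => ?_) (fun q hq => ?_) (fun q hq => ?_) (fun q hq => ?_) fun q _ => rfl
  all_goals simp only [mem_sigma, mem_powersetCard, subset_erase] at hq ⊢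
  · obtain ⟨hi, ⟨hsub, hnot⟩, hcard⟩ := hq
    exact ⟨⟨insert_subset hi hsub, by rw [card_insert_of_notMem hnot, hcard]⟩,
      mem_insert_self _ _⟩
  · obtain ⟨⟨hsub, hcard⟩, hi⟩ := hq
    exact ⟨hsub hi, ⟨(erase_subset _ _).trans hsub, notMem_erase _ _⟩,
      by rw [card_erase_of_mem hi, hcard]; rfl⟩
  · rw [erase_insert hq.2.1.2]
  · rw [insert_erase hq.2]

lemma expect_powersetCard_expect_insert (W : Finset α) (k : ℕ) (F : Finset α → ℝ) :
    𝔼 y ∈ powersetCard k W, 𝔼 j ∈ W \ y, F (insert j y) = 𝔼 x ∈ powersetCard (k + 1) W, F x := by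
  rw [← expect_expect_powersetCard_erase W k fun j y => F (insert j y),
    expect_expect_powersetCard_insert W k fun _ x => F x]
  refine expect_congr rfl fun x hx => expect_const (card_pos.1 ?_) _
  rw [(mem_powersetCard.1 hx).2]
  exact k.succ_pos

lemma sqrt_expect_powersetCard_sub_sq_le {W : Finset α} {k : ℕ} (hk : k < #W)
    (g f : Finset α → ℝ) :
    (√(𝔼 y ∈ powersetCard k W, g y ^ 2) - √(𝔼 x ∈ powersetCard (k + 1) W, f x ^ 2)) ^ 2
      ≤ 𝔼 y ∈ powersetCard k W, 𝔼 j ∈ W \ y, (g y - f (insert j y)) ^ 2 := by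
  have hcard : ∀ y ∈ powersetCard k W, #(W \ y) = #W - k := fun y hy => by
    rw [card_sdiff_of_subset (mem_powersetCard.1 hy).1, (mem_powersetCard.1 hy).2]
  have hg : 𝔼 y ∈ powersetCard k W, 𝔼 _j ∈ W \ y, g y ^ 2 = 𝔼 y ∈ powersetCard k W, g y ^ 2 :=
    expect_congr rfl fun y hy => expect_const (card_pos.1 (by rw [hcard y hy]; omega)) _
  rw [← hg, ← expect_powersetCard_expect_insert W k fun x => f x ^ 2,
    ← expect_sigma_of_card_eq hcard, ← expect_sigma_of_card_eq hcard,
    ← expect_sigma_of_card_eq hcard]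
  exact sqrt_expect_sub_sqrt_expect_sq_le _ _ _

lemma sum_powersetCard_succ {V : Finset α} {i : α} (hi : i ∈ V) (k : ℕ) (F : Finset α → ℝ) :
    ∑ x ∈ powersetCard (k + 1) V, F x
      = ∑ y ∈ powersetCard k (V.erase i), F (insert i y)
        + ∑ y ∈ powersetCard (k + 1) (V.erase i), F y := by
  have hnot : ∀ {m : ℕ}, ∀ y ∈ powersetCard m (V.erase i), i ∉ y := fun y hy =>
    (mem_powersetCard_erase.1 hy).2
  conv_lhs => rw [← insert_erase hi, powersetCard_succ_insert (notMem_erase i V)]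
  rw [sum_union, sum_image, add_comm]
  · exact fun x hx y hy h => by rw [← erase_insert (hnot x hx), ← erase_insert (hnot y hy), h]
  · refine disjoint_left.2 fun x hx hx' => ?_
    obtain ⟨y, -, rfl⟩ := mem_image.1 hx'
    exact hnot _ hx (mem_insert_self i y)

lemma expect_powersetCard_succ {V : Finset α} {i : α} {k : ℕ} (hi : i ∈ V) (hk : k < #V)
    {p : ℝ} (hp : p = (k + 1) / #V) (F : Finset α → ℝ) :
    𝔼 x ∈ powersetCard (k + 1) V, F x
      = p * 𝔼 y ∈ powersetCard k (V.erase i), F (insert i y)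
        + (1 - p) * 𝔼 y ∈ powersetCard (k + 1) (V.erase i), F y := by
  obtain ⟨l, hl⟩ : ∃ l, #V = l + 1 := ⟨#V - 1, by omega⟩
  have hl' : #(V.erase i) = l := by rw [card_erase_of_mem hi, hl]; rfl
  have hchoose : ((l + 1).choose (k + 1) : ℝ) ≠ 0 :=
    Nat.cast_ne_zero.2 (Nat.choose_pos (by omega)).ne'
  have hone : ((l + 1).choose (k + 1) : ℝ) * p = l.choose k := by
    have : ((l + 1) * l.choose k : ℝ) = (l + 1).choose (k + 1) * (k + 1) := by
      exact_mod_cast Nat.add_one_mul_choose_eq l k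
    rw [hp, hl, ← mul_div_assoc, ← this]
    push_cast
    field_simp
  have hzero : ((l + 1).choose (k + 1) : ℝ) * (1 - p) = l.choose (k + 1) := by
    rw [mul_sub, hone, mul_one, Nat.choose_succ_succ]
    push_cast
    ring
  have hsum := sum_powersetCard_succ hi k F
  rw [← card_mul_expect, ← card_mul_expect, ← card_mul_expect, card_powersetCard,
    card_powersetCard, card_powersetCard, hl, hl', ← hone, ← hzero] at hsum
  refine mul_left_cancel₀ hchoose (hsum.trans ?_)
  ring

end PowersetCard

section LogSobolev

/-- The entropy `𝔼 F log F - 𝔼 F log 𝔼 F` of a nonnegative function under the uniform measure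
on `s`, written with `negMulLog x = -x log x`. -/
noncomputable def uniformEntropy {ι : Type*} (s : Finset ι) (F : ι → ℝ) : ℝ :=
  negMulLog (𝔼 i ∈ s, F i) - 𝔼 i ∈ s, negMulLog (F i)

lemma uniformEntropy_singleton {ι : Type*} (a : ι) (F : ι → ℝ) : uniformEntropy {a} F = 0 := by
  simp [uniformEntropy]

variable {α : Type*} [DecidableEq α]

/-- The Dirichlet form of the chain on the `m`-subsets of `V` that exchanges a uniformly random
element of `x` with a uniformly random element of `V \ x`. -/
noncomputable def exchangeEnergy (V : Finset α) (m : ℕ) (f : Finset α → ℝ) : ℝ :=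
  𝔼 x ∈ powersetCard m V, 𝔼 i ∈ x, 𝔼 j ∈ V \ x, (f x - f (insert j (x.erase i))) ^ 2

lemma exchangeEnergy_nonneg (V : Finset α) (m : ℕ) (f : Finset α → ℝ) :
    0 ≤ exchangeEnergy V m f :=
  expect_nonneg fun _ _ => expect_nonneg fun _ _ => expect_nonneg fun _ _ => sq_nonneg _

lemma expect_exchangeEnergy_erase_le (V : Finset α) (m : ℕ) (f : Finset α → ℝ) :
    𝔼 i ∈ V, exchangeEnergy (V.erase i) m f ≤ exchangeEnergy V m f := by
  unfold exchangeEnergy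
  rw [expect_expect_powersetCard_erase V m fun i x =>
    𝔼 a ∈ x, 𝔼 j ∈ V.erase i \ x, (f x - f (insert j (x.erase a))) ^ 2]
  refine expect_le_expect fun x _ => ?_
  rw [expect_comm]
  refine expect_le_expect fun a _ => ?_
  simp only [erase_sdiff_comm]
  exact expect_expect_erase_le fun j _ => sq_nonneg _

lemma expect_exchangeEnergy_insert_le (V : Finset α) (k : ℕ) (f : Finset α → ℝ) :
    𝔼 i ∈ V, exchangeEnergy (V.erase i) k (fun y => f (insert i y))
      ≤ exchangeEnergy V (k + 1) f := by
  have hterm : ∀ i ∈ V, exchangeEnergy (V.erase i) k (fun y => f (insert i y))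
      = 𝔼 y ∈ powersetCard k (V.erase i), 𝔼 a ∈ (insert i y).erase i, 𝔼 j ∈ V \ insert i y,
        (f (insert i y) - f (insert j ((insert i y).erase a))) ^ 2 := fun i _ => by
    refine expect_congr rfl fun y hy => ?_
    have hiy : i ∉ y := (mem_powersetCard_erase.1 hy).2
    rw [erase_insert hiy, sdiff_insert, ← erase_sdiff_comm]
    refine expect_congr rfl fun a ha => ?_
    rw [erase_insert_of_ne (ne_of_mem_of_not_mem ha hiy).symm]
    simp only [Finset.insert_comm i]
  rw [expect_congr rfl hterm, expect_expect_powersetCard_insert V k fun i x =>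
    𝔼 a ∈ x.erase i, 𝔼 j ∈ V \ x, (f x - f (insert j (x.erase a))) ^ 2]
  exact expect_le_expect fun x _ => expect_expect_erase_le fun a _ =>
    expect_nonneg fun j _ => sq_nonneg _

lemma expect_expect_insert_sub_sq (V : Finset α) (k : ℕ) (f : Finset α → ℝ) :
    𝔼 i ∈ V, 𝔼 y ∈ powersetCard k (V.erase i), 𝔼 j ∈ V.erase i \ y,
      (f (insert i y) - f (insert j y)) ^ 2 = exchangeEnergy V (k + 1) f := by
  rw [exchangeEnergy, ← expect_expect_powersetCard_insert V k fun i x =>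
    𝔼 j ∈ V \ x, (f x - f (insert j (x.erase i))) ^ 2]
  refine expect_congr rfl fun i _ => expect_congr rfl fun y hy => ?_
  rw [erase_insert (mem_powersetCard_erase.1 hy).2, sdiff_insert, erase_sdiff_comm]

-- Condition on whether `i` belongs to the random set, and compare the two halves through the
-- coupling that sends `insert i y` to `insert j y` for a random `j`.
lemma uniformEntropy_sq_powersetCard_succ_le {V : Finset α} {i : α} {k : ℕ} (hi : i ∈ V)
    (hk : k + 1 < #V) {p : ℝ} (hp : p = (k + 1) / #V) (f : Finset α → ℝ) :
    uniformEntropy (powersetCard (k + 1) V) (fun x => f x ^ 2)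
      ≤ p * uniformEntropy (powersetCard k (V.erase i)) (fun y => f (insert i y) ^ 2)
        + (1 - p) * uniformEntropy (powersetCard (k + 1) (V.erase i)) (fun y => f y ^ 2)
        + 4 * binEntropy p * 𝔼 y ∈ powersetCard k (V.erase i), 𝔼 j ∈ V.erase i \ y,
          (f (insert i y) - f (insert j y)) ^ 2 := by
  have hV : (0 : ℝ) < #V := Nat.cast_pos.2 (by omega)
  have hp0 : 0 < p := by rw [hp]; positivity
  have hp1 : p < 1 := by
    rw [hp, div_lt_one hV]
    exact_mod_cast hk
  have htwo := two_point_entropy_le hp0 hp1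
    (sqrt_nonneg (𝔼 y ∈ powersetCard k (V.erase i), f (insert i y) ^ 2))
    (sqrt_nonneg (𝔼 y ∈ powersetCard (k + 1) (V.erase i), f y ^ 2))
  rw [sq_sqrt (expect_nonneg fun _ _ => sq_nonneg _),
    sq_sqrt (expect_nonneg fun _ _ => sq_nonneg _)] at htwo
  have hcouple := sqrt_expect_powersetCard_sub_sq_le (W := V.erase i) (k := k)
    (by rw [card_erase_of_mem hi]; omega) (fun y => f (insert i y)) f
  have hcouple' := mul_le_mul_of_nonneg_left hcouple
    (show 0 ≤ 4 * binEntropy p by linarith [binEntropy_nonneg hp0.le hp1.le])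
  simp only [uniformEntropy]
  rw [expect_powersetCard_succ hi (by omega) hp fun x => f x ^ 2,
    expect_powersetCard_succ hi (by omega) hp fun x => negMulLog (f x ^ 2)]
  linarith

lemma uniformEntropy_sq_powersetCard_succ_le_expect {V : Finset α} {k : ℕ} (hk : k + 1 < #V)
    {p : ℝ} (hp : p = (k + 1) / #V) (f : Finset α → ℝ) :
    uniformEntropy (powersetCard (k + 1) V) (fun x => f x ^ 2)
      ≤ p * 𝔼 i ∈ V, uniformEntropy (powersetCard k (V.erase i)) (fun y => f (insert i y) ^ 2)
        + (1 - p) * 𝔼 i ∈ V, uniformEntropy (powersetCard (k + 1) (V.erase i)) (fun y => f y ^ 2)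
        + 4 * binEntropy p * exchangeEnergy V (k + 1) f := by
  have hV : V.Nonempty := card_pos.1 (by omega)
  rw [← expect_expect_insert_sub_sq, mul_expect, mul_expect, mul_expect, ← expect_add_distrib,
    ← expect_add_distrib]
  exact le_expect hV fun i hi => uniformEntropy_sq_powersetCard_succ_le hi hk hp f

lemma binEntropy_succ_div_concave {k l : ℕ} (hk : k < l) {p : ℝ} (hp : p = (k + 1) / (l + 1)) :
    p * binEntropy (k / l) + (1 - p) * binEntropy ((k + 1) / l) ≤ binEntropy p := by
  have hl : (0 : ℝ) < l := Nat.cast_pos.2 (k.zero_le.trans_lt hk)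
  have hkl : (k : ℝ) + 1 ≤ l := by exact_mod_cast hk
  have hp0 : 0 ≤ p := by rw [hp]; positivity
  have hp1 : p ≤ 1 := by rw [hp, div_le_one (by positivity)]; linarith
  have hconc := strictConcave_binEntropy.concaveOn.2
    (x := (k : ℝ) / l) ⟨by positivity, by rw [div_le_one hl]; linarith⟩
    (y := ((k : ℝ) + 1) / l) ⟨by positivity, by rwa [div_le_one hl]⟩
    hp0 (sub_nonneg.2 hp1) (add_sub_cancel p 1)
  have hmean : p * (k / l) + (1 - p) * ((k + 1) / l) = p := by
    rw [hp]
    field_simp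
    ring
  rwa [smul_eq_mul, smul_eq_mul, smul_eq_mul, smul_eq_mul, hmean] at hconc

lemma uniformEntropy_sq_le_exchangeEnergy_of_card_eq_succ {V : Finset α} {k l : ℕ}
    (hV : #V = l + 1) (hkl : k < l)
    (ih : ∀ W : Finset α, #W = l → ∀ m ≤ l, ∀ f : Finset α → ℝ,
      uniformEntropy (powersetCard m W) (fun x => f x ^ 2)
        ≤ 4 * l * binEntropy (m / l) * exchangeEnergy W m f)
    {p : ℝ} (hp : p = (k + 1) / (l + 1)) (f : Finset α → ℝ) :
    uniformEntropy (powersetCard (k + 1) V) (fun x => f x ^ 2)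
      ≤ 4 * (l + 1) * binEntropy p * exchangeEnergy V (k + 1) f := by
  have hp0 : 0 ≤ p := by rw [hp]; positivity
  have hp1 : 0 ≤ 1 - p := by
    rw [sub_nonneg, hp]
    exact div_le_one_of_le₀ (by exact_mod_cast Nat.succ_le_succ hkl.le) (by positivity)
  have hmean : ∀ m ≤ l, ∀ (g : α → Finset α → ℝ) (E : ℝ),
      𝔼 i ∈ V, exchangeEnergy (V.erase i) m (g i) ≤ E →
      𝔼 i ∈ V, uniformEntropy (powersetCard m (V.erase i)) (fun y => g i y ^ 2)
        ≤ 4 * l * binEntropy (m / l) * E := fun m hm g E hE => by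
    have hbin : 0 ≤ binEntropy (m / l) := binEntropy_nonneg (by positivity)
      (div_le_one_of_le₀ (Nat.cast_le.2 hm) (Nat.cast_nonneg l))
    refine le_trans ?_ (mul_le_mul_of_nonneg_left hE (by positivity))
    rw [mul_expect]
    exact expect_le_expect fun i hi => ih _ (by rw [card_erase_of_mem hi, hV]; rfl) m hm (g i)
  have hin := mul_le_mul_of_nonneg_left (hmean k hkl.le (fun i y => f (insert i y)) _
    (expect_exchangeEnergy_insert_le V k f)) hp0
  have hout := mul_le_mul_of_nonneg_left (hmean (k + 1) hkl (fun _ => f) _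
    (expect_exchangeEnergy_erase_le V (k + 1) f)) hp1
  have hconc := mul_le_mul_of_nonneg_left (binEntropy_succ_div_concave hkl hp)
    (mul_nonneg (by positivity : (0 : ℝ) ≤ 4 * l) (exchangeEnergy_nonneg V (k + 1) f))
  have hrec := uniformEntropy_sq_powersetCard_succ_le_expect (V := V) (k := k) (by omega)
    (hp.trans (by rw [hV, Nat.cast_succ])) f
  push_cast at hout
  linarith

theorem uniformEntropy_sq_le_exchangeEnergy {V : Finset α} {m : ℕ} (hm : m ≤ #V)
    (f : Finset α → ℝ) :
    uniformEntropy (powersetCard m V) (fun x => f x ^ 2)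
      ≤ 4 * #V * binEntropy (m / #V) * exchangeEnergy V m f := by
  obtain ⟨l, hl⟩ : ∃ l, #V = l := ⟨_, rfl⟩
  induction l generalizing V m f with
  | zero =>
    obtain rfl : m = 0 := by omega
    simp [hl, uniformEntropy_singleton]
  | succ l ih =>
    rcases hm.eq_or_lt with rfl | hlt
    · have : (#V : ℝ) ≠ 0 := by rw [hl]; positivity
      simp [uniformEntropy_singleton, div_self this]
    rcases m with _ | k
    · simp [uniformEntropy_singleton]
    rw [hl, Nat.cast_succ, Nat.cast_succ]
    refine uniformEntropy_sq_le_exchangeEnergy_of_card_eq_succ hl (by omega) ?_ rfl f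
    rintro W rfl j hj g
    exact ih hj g rfl

end LogSobolev

section NormComparison

lemma mul_sq_add_negMulLog_le_abs {s : ℝ} (hs : 0 ≤ s) (t : ℝ) :
    s * t ^ 2 + t ^ 2 * negMulLog s + s / 2 * negMulLog (t ^ 2) ≤ |t| := by
  calc s * t ^ 2 + t ^ 2 * negMulLog s + s / 2 * negMulLog (t ^ 2)
      = |t| * (s * |t| + negMulLog (s * |t|)) := by
        rw [← sq_abs, pow_two, negMulLog_mul, negMulLog_mul]
        ring
    _ ≤ |t| * 1 := by
        gcongr
        linarith [negMulLog_le_one_sub_self (mul_nonneg hs (abs_nonneg t))]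
    _ = |t| := mul_one _

theorem expect_sq_le_of_uniformEntropy_le {ι : Type*} {s : Finset ι} {g : ι → ℝ} {K : ℝ}
    (h : uniformEntropy s (fun i => g i ^ 2) ≤ K * 𝔼 i ∈ s, g i ^ 2) :
    𝔼 i ∈ s, g i ^ 2 ≤ exp K * (𝔼 i ∈ s, |g i|) ^ 2 := by
  rw [uniformEntropy] at h
  obtain ⟨N, hN⟩ : ∃ N, N = 𝔼 i ∈ s, g i ^ 2 := ⟨_, rfl⟩
  rw [← hN] at h ⊢
  rcases (hN ▸ expect_nonneg fun i _ => sq_nonneg (g i) : 0 ≤ N).eq_or_lt with hN0 | hNpos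
  · rw [← hN0]
    positivity
  obtain ⟨c, hc⟩ : ∃ c, c = exp (-(log N + K) / 2) := ⟨_, rfl⟩
  have hc0 : 0 ≤ c := hc ▸ (exp_pos _).le
  have htangent : c * N + N * negMulLog c + c / 2 * 𝔼 i ∈ s, negMulLog (g i ^ 2)
      ≤ 𝔼 i ∈ s, |g i| := by
    rw [hN, mul_expect, mul_expect, expect_mul, ← expect_add_distrib, ← expect_add_distrib]
    exact expect_le_expect fun i _ => mul_sq_add_negMulLog_le_abs hc0 (g i)
  have hentropy : c / 2 * (negMulLog N - K * N) ≤ c / 2 * 𝔼 i ∈ s, negMulLog (g i ^ 2) := by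
    gcongr
    linarith
  have hmean : c * N ≤ 𝔼 i ∈ s, |g i| := by
    have hcancel : N * negMulLog c + c / 2 * (negMulLog N - K * N) = 0 := by
      rw [negMulLog, negMulLog, show log c = -(log N + K) / 2 by rw [hc, log_exp]]
      ring
    linarith
  have hcsq : exp K * c ^ 2 * N = 1 := by
    rw [hc, ← exp_nat_mul, ← exp_add]
    nth_rewrite 2 [← exp_log hNpos]
    rw [← exp_add, exp_eq_one_iff]
    push_cast
    ring
  calc N = exp K * (c * N) ^ 2 := by linear_combination -N * hcsq
    _ ≤ exp K * (𝔼 i ∈ s, |g i|) ^ 2 := by gcongr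

end NormComparison

section Triangular

variable {E : Type*} [NormedAddCommGroup E] [InnerProductSpace ℝ E] {T : E →ₗ[ℝ] E}
  {W : ℕ → Submodule ℝ E} {c : ℕ → ℝ}

lemma map_mem_of_triangular (hW₀ : W 0 = ⊥) (hmono : Monotone W)
    (hT : ∀ d, ∀ v ∈ W (d + 1), T v - c d • v ∈ W d) {d : ℕ} {v : E} (hv : v ∈ W d) :
    T v ∈ W d := by
  rcases d with _ | d
  · rw [hW₀, Submodule.mem_bot] at hv ⊢
    rw [hv, map_zero]
  · simpa using add_mem (hmono d.le_succ (hT d v hv)) ((W (d + 1)).smul_mem (c d) hv)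

lemma map_eq_smul_of_triangular_of_mem_orthogonal (hsymm : T.IsSymmetric) (hW₀ : W 0 = ⊥)
    (hmono : Monotone W) (hT : ∀ d, ∀ v ∈ W (d + 1), T v - c d • v ∈ W d) {d : ℕ} {v : E}
    (hv : v ∈ W (d + 1)) (hv' : v ∈ (W d)ᗮ) : T v = c d • v := by
  have hTv : T v ∈ (W d)ᗮ := fun u hu => by
    rw [← hsymm u v]
    exact hv' _ (map_mem_of_triangular hW₀ hmono hT hu)
  have horth : T v - c d • v ∈ (W d)ᗮ := sub_mem hTv (Submodule.smul_mem _ _ hv')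
  exact sub_eq_zero.1 (inner_self_eq_zero.1 (horth _ (hT d v hv)))

theorem inner_map_self_le_of_triangular [∀ d, (W d).HasOrthogonalProjection]
    (hsymm : T.IsSymmetric) (hW₀ : W 0 = ⊥) (hmono : Monotone W)
    (hT : ∀ d, ∀ v ∈ W (d + 1), T v - c d • v ∈ W d) {B : ℝ} {d : ℕ} (hB : ∀ e < d, c e ≤ B)
    {v : E} (hv : v ∈ W d) : inner ℝ (T v) v ≤ B * ‖v‖ ^ 2 := by
  induction d generalizing v with
  | zero =>
    rw [hW₀, Submodule.mem_bot] at hv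
    simp [hv]
  | succ d ih =>
    obtain ⟨u, hu, w, hw, rfl⟩ := (W d).exists_add_mem_mem_orthogonal v
    have hwmem : w ∈ W (d + 1) := by simpa using sub_mem hv (hmono d.le_succ hu)
    have hTw := map_eq_smul_of_triangular_of_mem_orthogonal hsymm hW₀ hmono hT hwmem hw
    have huw : inner ℝ u w = 0 := hw u hu
    have hwu : inner ℝ w u = 0 := real_inner_comm u w ▸ huw
    have hTuw : inner ℝ (T u) w = 0 := hw _ (map_mem_of_triangular hW₀ hmono hT hu)
    have hnorm : ‖u + w‖ ^ 2 = ‖u‖ ^ 2 + ‖w‖ ^ 2 := by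
      simpa only [pow_two] using norm_add_sq_eq_norm_sq_add_norm_sq_real huw
    calc inner ℝ (T (u + w)) (u + w) = inner ℝ (T u) u + c d * ‖w‖ ^ 2 := by
          rw [map_add, hTw, inner_add_left, inner_add_right, inner_add_right, hTuw,
            inner_smul_left, inner_smul_left, hwu, real_inner_self_eq_norm_sq]
          simp
      _ ≤ B * ‖u‖ ^ 2 + B * ‖w‖ ^ 2 := by
          gcongr
          · exact ih (fun e he => hB e (he.trans d.lt_succ_self)) hu
          · exact hB d d.lt_succ_self
      _ = B * ‖u + w‖ ^ 2 := by rw [hnorm, mul_add]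

end Triangular

section Involution

variable {X : Type*} [Fintype X] {σ : X → X}

lemma sum_sub_comp_mul (hσ : σ.Involutive) (f g : X → ℝ) :
    ∑ x, (f x - f (σ x)) * g x = ∑ x, f x * (g x - g (σ x)) := by
  have hswap : ∑ x, f (σ x) * g x = ∑ x, f x * g (σ x) := by
    rw [← Equiv.sum_comp hσ.toPerm fun x => f x * g (σ x)]
    exact sum_congr rfl fun x _ => by rw [hσ.coe_toPerm, hσ x]
  simp only [sub_mul, mul_sub, sum_sub_distrib, hswap]

lemma sum_sub_comp_sq (hσ : σ.Involutive) (f : X → ℝ) :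
    ∑ x, (f x - f (σ x)) ^ 2 = 2 * ∑ x, (f x - f (σ x)) * f x := by
  simp only [pow_two]
  rw [sum_sub_comp_mul hσ f fun x => f x - f (σ x), mul_sum]
  refine sum_congr rfl fun x _ => ?_
  rw [hσ x]
  ring

end Involution

section Swap

variable {α : Type*} [DecidableEq α] {T : Finset α} {i j : α}

lemma map_swap_of_mem_iff_mem (h : i ∈ T ↔ j ∈ T) :
    T.map (Equiv.swap i j).toEmbedding = T := by
  ext a
  rw [mem_map_equiv, Equiv.symm_swap, Equiv.swap_apply_def]
  split_ifs with hi hj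
  · rw [hi, h]
  · rw [hj, h]
  · rfl

lemma map_swap_eq_insert_erase (hi : i ∈ T) (hj : j ∉ T) :
    T.map (Equiv.swap i j).toEmbedding = insert j (T.erase i) := by
  nth_rw 1 [← insert_erase hi]
  rw [map_insert, map_swap_of_mem_iff_mem (iff_of_false (notMem_erase i T)
    fun h => hj (mem_of_mem_erase h)), Equiv.coe_toEmbedding, Equiv.swap_apply_left]

lemma sum_sum_eq_two_mul_of_symm [Fintype α] {D : α → α → ℝ} (hsymm : ∀ i j, D i j = D j i)
    (hD : ∀ i j, (i ∈ T ↔ j ∈ T) → D i j = 0) :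
    ∑ i, ∑ j, D i j = 2 * ∑ i ∈ T, ∑ j ∈ Tᶜ, D i j := by
  have hrow : ∑ i ∈ T, ∑ j, D i j = ∑ i ∈ T, ∑ j ∈ Tᶜ, D i j := sum_congr rfl fun i hi => by
    rw [← sum_add_sum_compl T, sum_eq_zero fun j hj => hD i j (iff_of_true hi hj), zero_add]
  have hrow_compl : ∑ i ∈ Tᶜ, ∑ j, D i j = ∑ i ∈ T, ∑ j ∈ Tᶜ, D i j := by
    rw [sum_comm (s := T)]
    refine sum_congr rfl fun i hi => ?_
    rw [← sum_add_sum_compl T, sum_eq_zero fun j hj =>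
      hD i j (iff_of_false (mem_compl.1 hi) (mem_compl.1 hj)), add_zero]
    exact sum_congr rfl fun j _ => hsymm i j
  rw [← sum_add_sum_compl T, hrow, hrow_compl, two_mul]

end Swap

section SlicePolynomial

lemma andT_apply (T : Finset (Fin n)) (x : SlicePoint n p) :
    andT T x = if ∀ i ∈ T, x.1 i = true then 1 else 0 := by
  simp only [andT, coordR, prod_ite_zero, prod_const_one]

lemma andT_mul_andT (S T : Finset (Fin n)) :
    (andT S * andT T : SlicePoint n p → ℝ) = andT (S ∪ T) := by
  funext x
  simp only [Pi.mul_apply, andT_apply, ite_zero_mul_ite_zero, mul_one, forall_mem_union]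

lemma andT_mul_coordR (T : Finset (Fin n)) (j : Fin n) (x : SlicePoint n p) :
    andT T x * coordR x j = andT (insert j T) x := by
  simp only [andT_apply, coordR, ite_zero_mul_ite_zero, mul_one, forall_mem_insert, and_comm]

lemma sum_coordR (x : SlicePoint n p) : ∑ i, coordR x i = p * n := by
  simp only [coordR, sum_boole]
  exact x.2

lemma andT_permPt (T : Finset (Fin n)) (τ : Equiv.Perm (Fin n)) (x : SlicePoint n p) :
    andT T (permPt τ x) = andT (T.map τ.symm.toEmbedding) x := by
  rw [andT, andT, prod_map]
  rfl

lemma mul_mem_degLE {k l : ℕ} {f g : SlicePoint n p → ℝ} (hf : f ∈ degLE n p k)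
    (hg : g ∈ degLE n p l) : f * g ∈ degLE n p (k + l) := by
  have hmem : f * g ∈ degLE n p k * degLE n p l := Submodule.mul_mem_mul hf hg
  rw [degLE, degLE, Submodule.span_mul_span] at hmem
  refine Submodule.span_mono ?_ hmem
  rintro _ ⟨_, ⟨S, hS, rfl⟩, _, ⟨T, hT, rfl⟩, rfl⟩
  exact ⟨S ∪ T, (card_union_le S T).trans (add_le_add hS hT), andT_mul_andT S T⟩

lemma sq_mem_degLE {k : ℕ} {f : SlicePoint n p → ℝ} (hf : f ∈ degLE n p k) :
    (fun x => f x ^ 2) ∈ degLE n p (2 * k) := by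
  have hsq : (fun x => f x ^ 2) = f * f := funext fun x => pow_two (f x)
  rw [hsq, two_mul]
  exact mul_mem_degLE hf hf

lemma degLT_zero : degLT n p 0 = ⊥ := by
  simp [degLT]

lemma degLT_succ (k : ℕ) : degLT n p (k + 1) = degLE n p k := by
  simp only [degLT, degLE, Nat.lt_succ_iff]

lemma degLT_mono : Monotone (degLT n p) := fun _ _ hkl =>
  Submodule.span_mono fun _ ⟨T, hT, hg⟩ => ⟨T, hT.trans_le hkl, hg⟩

lemma andT_mem_degLT {T : Finset (Fin n)} {k : ℕ} (hT : #T < k) : andT T ∈ degLT n p k :=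
  Submodule.subset_span ⟨T, hT, rfl⟩

end SlicePolynomial

section SwapLaplacian

lemma permPt_swap_involutive (i j : Fin n) :
    (permPt (p := p) (Equiv.swap i j)).Involutive := fun x => by
  ext a
  simp [permPt]

/-- The unnormalised Laplacian `∑ i, ∑ j, (f - f^{(ij)})` of the random transposition walk. It is
normalised differently from `sliceLap`, so that its coefficients on `andT T` are polynomials. -/
noncomputable def swapLaplacian (n : ℕ) (p : ℝ) :
    (SlicePoint n p → ℝ) →ₗ[ℝ] (SlicePoint n p → ℝ) :=
  ∑ i, ∑ j, (LinearMap.id - LinearMap.funLeft ℝ ℝ (permPt (Equiv.swap i j)))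

lemma swapLaplacian_apply (f : SlicePoint n p → ℝ) (x : SlicePoint n p) :
    swapLaplacian n p f x = ∑ i, ∑ j, (f x - f (permPt (Equiv.swap i j) x)) := by
  simp [swapLaplacian, LinearMap.funLeft_apply]

lemma sum_swapLaplacian_mul (f g : SlicePoint n p → ℝ) :
    ∑ x, swapLaplacian n p f x * g x
      = ∑ i, ∑ j, ∑ x, (f x - f (permPt (Equiv.swap i j) x)) * g x := by
  simp only [swapLaplacian_apply, sum_mul]
  rw [sum_comm]
  exact sum_congr rfl fun i _ => sum_comm

lemma sum_swapLaplacian_mul_comm (f g : SlicePoint n p → ℝ) :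
    ∑ x, swapLaplacian n p f x * g x = ∑ x, f x * swapLaplacian n p g x := by
  simp only [mul_comm (f _)]
  rw [sum_swapLaplacian_mul, sum_swapLaplacian_mul]
  refine sum_congr rfl fun i _ => sum_congr rfl fun j _ => ?_
  rw [sum_sub_comp_mul (permPt_swap_involutive i j)]
  exact sum_congr rfl fun x _ => mul_comm _ _

lemma sum_sub_permPt_swap_sq (f : SlicePoint n p → ℝ) :
    ∑ x, ∑ i, ∑ j, (f x - f (permPt (Equiv.swap i j) x)) ^ 2
      = 2 * ∑ x, swapLaplacian n p f x * f x := by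
  rw [sum_swapLaplacian_mul, mul_sum, sum_comm]
  refine sum_congr rfl fun i _ => ?_
  rw [mul_sum, sum_comm]
  exact sum_congr rfl fun j _ => sum_sub_comp_sq (permPt_swap_involutive i j) f

lemma sum_compl_andT_sub_permPt_swap {T : Finset (Fin n)} {i : Fin n} (hi : i ∈ T)
    (x : SlicePoint n p) :
    ∑ j ∈ Tᶜ, (andT T x - andT T (permPt (Equiv.swap i j) x))
      = (n - #T + 1) * andT T x - (p * n - #T + 1) * andT (T.erase i) x := by
  have hterm : ∀ j ∈ Tᶜ, andT T x - andT T (permPt (Equiv.swap i j) x)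
      = andT T x - andT (T.erase i) x * coordR x j := fun j hj => by
    rw [andT_permPt, Equiv.symm_swap, map_swap_eq_insert_erase hi (mem_compl.1 hj),
      andT_mul_coordR]
  have hin : ∑ j ∈ T, andT (T.erase i) x * coordR x j
      = andT T x + (#T - 1) * andT (T.erase i) x := by
    have hfix : ∀ j ∈ T.erase i, andT (T.erase i) x * coordR x j = andT (T.erase i) x :=
      fun j hj => by rw [andT_mul_coordR, insert_eq_of_mem hj]
    rw [← add_sum_erase T _ hi, andT_mul_coordR, insert_erase hi, sum_congr rfl hfix, sum_const,
      nsmul_eq_mul, cast_card_erase_of_mem hi]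
  have hall : ∑ j, andT (T.erase i) x * coordR x j = andT (T.erase i) x * (p * n) := by
    rw [← mul_sum, sum_coordR]
  rw [← sum_add_sum_compl T, hin] at hall
  rw [sum_congr rfl hterm, sum_sub_distrib, sum_const, nsmul_eq_mul, card_compl,
    Nat.cast_sub (card_le_univ T), Fintype.card_fin]
  linarith

lemma swapLaplacian_andT (T : Finset (Fin n)) :
    swapLaplacian n p (andT T) = (2 * #T * (n - #T + 1) : ℝ) • andT T
      - (2 * (p * n - #T + 1)) • ∑ i ∈ T, andT (T.erase i) := by
  funext x
  rw [swapLaplacian_apply, sum_sum_eq_two_mul_of_symm (T := T)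
      (fun i j => by rw [Equiv.swap_comm])
      (fun i j h => by
        rw [andT_permPt, Equiv.symm_swap, map_swap_of_mem_iff_mem h, sub_self]),
    sum_congr rfl fun i hi => sum_compl_andT_sub_permPt_swap hi x, sum_sub_distrib, sum_const,
    nsmul_eq_mul, ← mul_sum]
  simp only [Pi.sub_apply, Pi.smul_apply, smul_eq_mul, Finset.sum_apply]
  ring

lemma swapLaplacian_sub_smul_mem_degLT (d : ℕ) {f : SlicePoint n p → ℝ}
    (hf : f ∈ degLT n p (d + 1)) :
    swapLaplacian n p f - (2 * d * (n - d + 1) : ℝ) • f ∈ degLT n p d := by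
  suffices degLT n p (d + 1) ≤ (degLT n p d).comap
      (swapLaplacian n p - (2 * d * (n - d + 1) : ℝ) • LinearMap.id) from this hf
  refine Submodule.span_le.2 ?_
  rintro _ ⟨T, hT, rfl⟩
  change swapLaplacian n p (andT T) - (2 * d * (n - d + 1) : ℝ) • andT T ∈ degLT n p d
  rw [swapLaplacian_andT, sub_right_comm]
  refine Submodule.sub_mem _ ?_ (Submodule.smul_mem _ _ (Submodule.sum_mem _ fun i hi => ?_))
  · rcases (Nat.lt_succ_iff.1 hT).eq_or_lt with rfl | hlt
    · rw [sub_self]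
      exact Submodule.zero_mem _
    · exact Submodule.sub_mem _ (Submodule.smul_mem _ _ (andT_mem_degLT hlt))
        (Submodule.smul_mem _ _ (andT_mem_degLT hlt))
  · exact andT_mem_degLT (by have := card_erase_lt_of_mem hi; omega)

lemma two_mul_mul_sub_add_one_le {k d : ℕ} (hkd : k ≤ d) (n : ℕ) :
    (2 * k * (n - k + 1) : ℝ) ≤ 2 * d * n := by
  rcases k.eq_zero_or_pos with rfl | hk
  · simp only [Nat.cast_zero, mul_zero, zero_mul]
    positivity
  · have hk1 : (1 : ℝ) ≤ k := Nat.one_le_cast.2 hk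
    calc (2 * k * (n - k + 1) : ℝ) ≤ 2 * k * n := by gcongr; linarith
      _ ≤ 2 * d * n := by gcongr

lemma sum_swapLaplacian_mul_self_le {d : ℕ} {f : SlicePoint n p → ℝ} (hf : f ∈ degLE n p d) :
    ∑ x, swapLaplacian n p f x * f x ≤ 2 * d * n * ∑ x, f x ^ 2 := by
  let e := WithLp.linearEquiv 2 ℝ (SlicePoint n p → ℝ)
  have hinner : ∀ u v : SlicePoint n p → ℝ, inner ℝ (e.symm u) (e.symm v) = ∑ x, u x * v x :=
    fun u v => by simp [e, PiLp.inner_apply, mul_comm]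
  have hle := inner_map_self_le_of_triangular
    (T := (e.symm : _ →ₗ[ℝ] _) ∘ₗ swapLaplacian n p ∘ₗ (e : _ →ₗ[ℝ] _))
    (W := fun k => (degLT n p k).comap (e : _ →ₗ[ℝ] _))
    (c := fun k => 2 * k * (n - k + 1)) (B := 2 * d * n) (d := d + 1) (v := e.symm f)
    (fun u v => ?_) ?_ (fun k l hkl => Submodule.comap_mono (degLT_mono hkl))
    (fun k v hv => swapLaplacian_sub_smul_mem_degLT k hv) (fun k hk => ?_) ?_
  · calc ∑ x, swapLaplacian n p f x * f x
        = inner ℝ (e.symm (swapLaplacian n p f)) (e.symm f) := (hinner _ _).symm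
      _ ≤ 2 * d * n * ‖e.symm f‖ ^ 2 := hle
      _ = 2 * d * n * ∑ x, f x ^ 2 := by
        rw [← real_inner_self_eq_norm_sq, hinner]
        simp only [pow_two]
  · rw [← e.symm_apply_apply u, ← e.symm_apply_apply v]
    exact (hinner _ _).trans ((sum_swapLaplacian_mul_comm _ _).trans (hinner _ _).symm)
  · simp [degLT_zero]
  · exact two_mul_mul_sub_add_one_le (Nat.lt_succ_iff.1 hk) n
  · exact (degLT_succ d).symm ▸ hf

lemma sum_sub_permPt_swap_sq_le {d : ℕ} {f : SlicePoint n p → ℝ} (hf : f ∈ degLE n p d) :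
    ∑ x, ∑ i, ∑ j, (f x - f (permPt (Equiv.swap i j) x)) ^ 2 ≤ 4 * d * n * ∑ x, f x ^ 2 := by
  rw [sum_sub_permPt_swap_sq]
  linarith [sum_swapLaplacian_mul_self_le hf]

end SwapLaplacian

section Hypercontractivity

/-- The set of coordinates at which `x` equals one. It identifies the slice with the family of
`p * n`-element subsets of `Fin n`. -/
def ones (x : SlicePoint n p) : Finset (Fin n) := univ.filter fun i => x.1 i = true

lemma mem_ones {x : SlicePoint n p} {i : Fin n} : i ∈ ones x ↔ x.1 i = true := by
  rw [ones, mem_filter_univ]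

lemma ones_injective : (ones (n := n) (p := p)).Injective := fun x y hxy =>
  Subtype.ext <| funext fun i => Bool.eq_iff_iff.2 <| by rw [← mem_ones, hxy, mem_ones]

lemma ones_permPt (τ : Equiv.Perm (Fin n)) (x : SlicePoint n p) :
    ones (permPt τ x) = (ones x).map τ.toEmbedding := by
  ext i
  rw [mem_map_equiv, mem_ones, mem_ones, permPt]

lemma card_ones {m : ℕ} (hm : (m : ℝ) = p * n) (x : SlicePoint n p) : #(ones x) = m := by
  exact_mod_cast Eq.trans x.2 hm.symm

lemma expect_powersetCard_univ {m : ℕ} (hm : (m : ℝ) = p * n) (F : Finset (Fin n) → ℝ) :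
    𝔼 s ∈ powersetCard m univ, F s = 𝔼 x : SlicePoint n p, F (ones x) := by
  refine (expect_nbij ones (fun x _ => mem_powersetCard_univ.2 (card_ones hm x)) (fun _ _ => rfl)
    ones_injective.injOn fun s hs => ?_).symm
  have hones : univ.filter (fun i => decide (i ∈ s) = true) = s := by
    simp only [decide_eq_true_eq, filter_univ_mem]
  refine ⟨⟨fun i => decide (i ∈ s), ?_⟩, mem_coe.2 (mem_univ _), hones⟩
  rw [hones, mem_powersetCard_univ.1 (mem_coe.1 hs), hm]

lemma exchangeEnergy_extend_le {m : ℕ} (hm : (m : ℝ) = p * n) (f : SlicePoint n p → ℝ) :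
    m * (n - m) * exchangeEnergy univ m (Function.extend ones f 0)
      ≤ 𝔼 x, ∑ i, ∑ j, (f x - f (permPt (Equiv.swap i j) x)) ^ 2 := by
  rw [exchangeEnergy, expect_powersetCard_univ hm, mul_expect]
  refine expect_le_expect fun x _ => ?_
  have hterm : ∀ i ∈ ones x, ∀ j ∈ univ \ ones x,
      (Function.extend ones f 0 (ones x)
        - Function.extend ones f 0 (insert j ((ones x).erase i))) ^ 2
      = (f x - f (permPt (Equiv.swap i j) x)) ^ 2 := fun i hi j hj => by
    rw [← map_swap_eq_insert_erase hi (mem_sdiff.1 hj).2, ← ones_permPt,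
      ones_injective.extend_apply, ones_injective.extend_apply]
  rw [expect_congr rfl fun i hi => expect_congr rfl (hterm i hi)]
  have hcard : (#(univ \ ones x) : ℝ) = n - m := by
    rw [cast_card_sdiff (subset_univ _), card_univ, Fintype.card_fin, card_ones hm]
  calc m * (n - m) * 𝔼 i ∈ ones x, 𝔼 j ∈ univ \ ones x,
        (f x - f (permPt (Equiv.swap i j) x)) ^ 2
      = ∑ i ∈ ones x, ∑ j ∈ univ \ ones x, (f x - f (permPt (Equiv.swap i j) x)) ^ 2 := by
        rw [mul_assoc, mul_expect, ← hcard, ← card_ones hm x]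
        simp only [card_mul_expect]
    _ ≤ ∑ i, ∑ j, (f x - f (permPt (Equiv.swap i j) x)) ^ 2 := by
        refine (sum_le_univ_sum_of_nonneg fun i => sum_nonneg fun j _ => sq_nonneg _).trans ?_
        exact sum_le_sum fun i _ => sum_le_univ_sum_of_nonneg fun j => sq_nonneg _

lemma exchangeEnergy_extend_le_of_mem_degLE {m : ℕ} (hm : (m : ℝ) = p * n) {d : ℕ}
    {f : SlicePoint n p → ℝ} (hf : f ∈ degLE n p d) :
    n * (p * (1 - p)) * exchangeEnergy univ m (Function.extend ones f 0)
      ≤ 4 * d * 𝔼 x, f x ^ 2 := by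
  rcases n.eq_zero_or_pos with rfl | hn
  · refine (mul_eq_zero_of_left (by simp) _).trans_le ?_
    exact mul_nonneg (by positivity) (expect_nonneg fun _ _ => sq_nonneg _)
  have hswap : 𝔼 x, ∑ i, ∑ j, (f x - f (permPt (Equiv.swap i j) x)) ^ 2
      ≤ 4 * d * n * 𝔼 x, f x ^ 2 := by
    rw [Fintype.expect_eq_sum_div_card, Fintype.expect_eq_sum_div_card, ← mul_div_assoc]
    gcongr
    exact sum_sub_permPt_swap_sq_le hf
  have hle := (exchangeEnergy_extend_le hm f).trans hswap
  rw [hm] at hle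
  refine le_of_mul_le_mul_left ?_ (Nat.cast_pos.2 hn : (0 : ℝ) < n)
  linarith

lemma uniformEntropy_sq_le_of_mem_degLE {m : ℕ} (hm : (m : ℝ) = p * n) (hp : 0 < p)
    (hp2 : p ≤ 1 / 2) {d : ℕ} {f : SlicePoint n p → ℝ} (hf : f ∈ degLE n p d) :
    uniformEntropy univ (fun x => f x ^ 2) ≤ 80 * d * -log p * 𝔼 x, f x ^ 2 := by
  have hmn : m ≤ #(univ : Finset (Fin n)) := by
    rw [card_univ, Fintype.card_fin, ← Nat.cast_le (α := ℝ), hm]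
    exact mul_le_of_le_one_left (Nat.cast_nonneg n) (by linarith)
  have hls := uniformEntropy_sq_le_exchangeEnergy hmn (Function.extend ones f 0)
  simp only [uniformEntropy, expect_powersetCard_univ hm, ones_injective.extend_apply, card_univ,
    Fintype.card_fin] at hls
  have hbin : n * binEntropy (m / n) ≤ n * (5 * (p * (1 - p) * -log p)) := by
    rcases n.eq_zero_or_pos with rfl | hn
    · simp only [Nat.cast_zero, zero_mul, le_refl]
    · rw [hm, mul_div_cancel_right₀ p (Nat.cast_pos.2 hn).ne']
      gcongr
      exact binEntropy_le_mul_neg_log hp hp2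
  have hlog : 0 ≤ -log p := neg_nonneg.2 (log_nonpos hp.le (by linarith))
  have henergy := mul_le_mul_of_nonneg_left (exchangeEnergy_extend_le_of_mem_degLE hm hf)
    (show 0 ≤ 20 * -log p by positivity)
  have hbin' := mul_le_mul_of_nonneg_right hbin
    (exchangeEnergy_nonneg univ m (Function.extend ones f 0))
  rw [uniformEntropy]
  linarith

theorem expect_sq_le_of_mem_degLE {m : ℕ} (hm : (m : ℝ) = p * n) (hp : 0 < p)
    (hp2 : p ≤ 1 / 2) {d : ℕ} {f : SlicePoint n p → ℝ} (hf : f ∈ degLE n p d) :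
    𝔼 x, f x ^ 2 ≤ p ^ (-(80 * d : ℝ)) * (𝔼 x, |f x|) ^ 2 := by
  have hexp : p ^ (-(80 * d : ℝ)) = exp (80 * d * -log p) := by
    rw [rpow_def_of_pos hp]
    ring_nf
  rw [hexp]
  exact expect_sq_le_of_uniformEntropy_le (uniformEntropy_sq_le_of_mem_degLE hm hp hp2 hf)

theorem expect_pow_four_le_of_mem_degLE {m : ℕ} (hm : (m : ℝ) = p * n) (hp : 0 < p)
    (hp2 : p ≤ 1 / 2) {d : ℕ} {f : SlicePoint n p → ℝ} (hf : f ∈ degLE n p d) :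
    𝔼 x, f x ^ 4 ≤ p ^ (-(160 * d : ℝ)) * (𝔼 x, f x ^ 2) ^ 2 := by
  calc 𝔼 x, f x ^ 4 = 𝔼 x, (f x ^ 2) ^ 2 := by simp only [← pow_mul]
    _ ≤ p ^ (-(80 * (2 * d : ℕ) : ℝ)) * (𝔼 x, |f x ^ 2|) ^ 2 :=
      expect_sq_le_of_mem_degLE hm hp hp2 (sq_mem_degLE hf)
    _ = p ^ (-(160 * d : ℝ)) * (𝔼 x, f x ^ 2) ^ 2 := by
      simp only [abs_sq]
      push_cast
      ring_nf

end Hypercontractivity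

/-- **Hypercontractivity on the slice.** There is a universal constant `C > 0` such that
every degree-`k` function `f` on `S(n,p)` (with `0 < p ≤ 1/2`, `p n ∈ ℤ`) satisfies
`E[f^8] ≤ p^{-C k} (E[f^2])^4`. -/
theorem bonami_slice :
    ∃ C : ℝ, 0 < C ∧
      ∀ (n : ℕ) (p : ℝ), 0 < p → p ≤ 1 / 2 → (∃ m : ℤ, (m : ℝ) = p * n) →
        ∀ (k : ℕ) (f : SlicePoint n p → ℝ), f ∈ degLE n p k →
          sExp (fun x => f x ^ 8) ≤ p ^ (-(C * k)) * sExp (fun x => f x ^ 2) ^ 4 := by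
  refine ⟨640, by norm_num, fun n p hp hp2 ⟨m, hm⟩ k f hf => ?_⟩
  lift m to ℕ using (by
    rw [← Int.cast_nonneg_iff (R := ℝ), hm]
    positivity)
  rw [Int.cast_natCast] at hm
  simp only [sExp, ← Fintype.expect_eq_sum_div_card]
  calc 𝔼 x, f x ^ 8 = 𝔼 x, (f x ^ 2) ^ 4 := by simp only [← pow_mul]
    _ ≤ p ^ (-(160 * (2 * k : ℕ) : ℝ)) * (𝔼 x, (f x ^ 2) ^ 2) ^ 2 :=
      expect_pow_four_le_of_mem_degLE hm hp hp2 (sq_mem_degLE hf)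
    _ = p ^ (-(320 * k : ℝ)) * (𝔼 x, f x ^ 4) ^ 2 := by
      simp only [← pow_mul]
      push_cast
      ring_nf
    _ ≤ p ^ (-(320 * k : ℝ)) * (p ^ (-(160 * k : ℝ)) * (𝔼 x, f x ^ 2) ^ 2) ^ 2 := by
      gcongr
      exact expect_pow_four_le_of_mem_degLE hm hp hp2 hf
    _ = p ^ (-(640 * k : ℝ)) * (𝔼 x, f x ^ 2) ^ 4 := by
      rw [mul_pow, ← rpow_mul_natCast hp.le, ← mul_assoc, ← rpow_add hp, ← pow_mul]
      ring_nf
end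

section
/- Let f : S(n,p) → ℝ and k ≥ 1, and suppose that ‖D_{P'} f‖₂ ≤ ε for every shifted sorted k-tuple P'. Then: (1) for every k-tuple P, ‖D_P f‖₂ ≤ 2^{10k²} ε; (2) if moreover every k-tuple P satisfies either ‖D_P f‖₂ ≤ ε or ‖D_P f‖₂ > 3ε, then every k-tuple P satisfies ‖D_P f‖₂ ≤ ε. -/
open Finset
open scoped Classical

variable {n : ℕ} {p : ℝ}

/-!
On the slice, antisymmetrising a function over three coordinates gives zero, because two of the
three coordinates of a point always agree. Hence `D_{ab} f = D_{ab} f^{(bc)} + D_{ab} f^{(ac)}`.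
Applying the other derivatives of a tuple `P ∋ (a,b)` and using `D_P (f^σ) = (D_{σP} f)^σ` yields
`‖D_P f‖ ≤ ‖D_{(bc)P} f‖ + ‖D_{(ac)P} f‖` for every pivot `c ≠ a, b`.

If `P` is not shifted, take for `c` the least index missing from `P`, and for `(a,b)` a pair with
`c < a`. If `P` is not sorted, it has nested pairs `w < x < y < z`; take `(a,b) = (x,y)` and
`c = z`, so that the two pairs become crossing, respectively disjoint. Both choices decrease a
potential which is at most `6k²`.
-/

/-! ### Norms and permutations on the slice -/

theorem sNorm_eq_norm_div (f : SlicePoint n p → ℝ) :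
    sNorm f = ‖(WithLp.toLp 2 f : EuclideanSpace ℝ (SlicePoint n p))‖ /
      √(Fintype.card (SlicePoint n p)) := by
  have hsum : 0 ≤ ∑ x, f x * f x := Finset.sum_nonneg fun x _ => mul_self_nonneg (f x)
  simp only [sNorm, sNormSq, sInner, sExp, Real.sqrt_div hsum, EuclideanSpace.norm_eq,
    Real.norm_eq_abs, sq, abs_mul_abs_self]

theorem sNorm_nonneg (f : SlicePoint n p → ℝ) : 0 ≤ sNorm f :=
  Real.sqrt_nonneg _

theorem sNorm_add_le (f g : SlicePoint n p → ℝ) : sNorm (f + g) ≤ sNorm f + sNorm g := by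
  simp only [sNorm_eq_norm_div, ← add_div, WithLp.toLp_add]
  gcongr
  exact norm_add_le _ _

theorem permPt_mul (π σ : Equiv.Perm (Fin n)) (x : SlicePoint n p) :
    permPt (π * σ) x = permPt π (permPt σ x) :=
  rfl

theorem permPt_one (x : SlicePoint n p) : permPt 1 x = x :=
  rfl

theorem permPt_bijective (π : Equiv.Perm (Fin n)) :
    Function.Bijective (permPt π : SlicePoint n p → SlicePoint n p) :=
  Function.bijective_iff_has_inverse.2 ⟨permPt π⁻¹,
    fun x => by rw [← permPt_mul, inv_mul_cancel, permPt_one],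
    fun x => by rw [← permPt_mul, mul_inv_cancel, permPt_one]⟩

theorem sNorm_comp_permPt (f : SlicePoint n p → ℝ) (π : Equiv.Perm (Fin n)) :
    sNorm (f ∘ permPt π) = sNorm f := by
  have hsum : ∑ x, f (permPt π x) * f (permPt π x) = ∑ x, f x * f x :=
    (permPt_bijective π).sum_comp fun x => f x * f x
  simp only [sNorm, sNormSq, sInner, sExp, Function.comp_apply, hsum]

theorem permPt_permPt_swap (π : Equiv.Perm (Fin n)) (i j : Fin n) (x : SlicePoint n p) :
    permPt π (permPt (Equiv.swap i j) x) = permPt (Equiv.swap (π i) (π j)) (permPt π x) := by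
  rw [← permPt_mul, ← permPt_mul, Equiv.mul_swap_eq_swap_mul]

theorem permPt_swap_eq_self {x : SlicePoint n p} {i j : Fin n} (h : x.1 i = x.1 j) :
    permPt (Equiv.swap i j) x = x := by
  refine Subtype.ext (funext fun t => ?_)
  simp only [permPt, Equiv.symm_swap, Equiv.swap_apply_def]
  grind

/-! ### Derivatives along tuples -/

theorem Dij_swap (i j : Fin n) (f : SlicePoint n p → ℝ) : Dij i j f = Dij j i f := by
  unfold Dij
  rw [Equiv.swap_comm]

theorem Dij_add (i j : Fin n) (f g : SlicePoint n p → ℝ) :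
    Dij i j (f + g) = Dij i j f + Dij i j g := by
  funext x
  simp only [Dij, Pi.add_apply]
  ring

theorem Dij_comp_permPt (i j : Fin n) (f : SlicePoint n p → ℝ) (σ : Equiv.Perm (Fin n)) :
    Dij i j (f ∘ permPt σ) = Dij (σ i) (σ j) f ∘ permPt σ := by
  funext x
  simp only [Dij, Function.comp_apply, permPt_permPt_swap]

theorem Dij_comm {a b c d : Fin n} (hac : a ≠ c) (had : a ≠ d) (hbc : b ≠ c) (hbd : b ≠ d)
    (f : SlicePoint n p → ℝ) : Dij a b (Dij c d f) = Dij c d (Dij a b f) := by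
  funext x
  have hswap : permPt (Equiv.swap a b) (permPt (Equiv.swap c d) x) =
      permPt (Equiv.swap c d) (permPt (Equiv.swap a b) x) := by
    rw [permPt_permPt_swap, Equiv.swap_apply_of_ne_of_ne hac.symm hbc.symm,
      Equiv.swap_apply_of_ne_of_ne had.symm hbd.symm]
  simp only [Dij, hswap]
  ring

theorem Dij_eq_add {a b c : Fin n} (hab : a ≠ b) (hca : c ≠ a) (hcb : c ≠ b)
    (f : SlicePoint n p → ℝ) :
    Dij a b f = Dij a b (f ∘ permPt (Equiv.swap b c)) + Dij a b (f ∘ permPt (Equiv.swap a c)) := by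
  funext x
  simp only [Dij, Function.comp_apply, Pi.add_apply]
  obtain h | h | h : x.1 a = x.1 b ∨ x.1 a = x.1 c ∨ x.1 b = x.1 c := by
    cases x.1 a <;> cases x.1 b <;> cases x.1 c <;> decide
  · rw [permPt_swap_eq_self h]
    ring
  · have hbc : permPt (Equiv.swap b c) (permPt (Equiv.swap a b) x) =
        permPt (Equiv.swap a b) x :=
      permPt_swap_eq_self (by simpa [permPt, Equiv.swap_apply_of_ne_of_ne hca hcb] using h)
    have hac : permPt (Equiv.swap a c) (permPt (Equiv.swap a b) x) = permPt (Equiv.swap b c) x := by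
      rw [permPt_permPt_swap, permPt_swap_eq_self h, Equiv.swap_apply_left,
        Equiv.swap_apply_of_ne_of_ne hab.symm hcb.symm, Equiv.swap_comm]
    rw [hbc, hac, permPt_swap_eq_self h]
    ring
  · have hac : permPt (Equiv.swap a c) (permPt (Equiv.swap a b) x) =
        permPt (Equiv.swap a b) x :=
      permPt_swap_eq_self (by simpa [permPt, Equiv.swap_apply_of_ne_of_ne hca hcb] using h)
    have hbc : permPt (Equiv.swap b c) (permPt (Equiv.swap a b) x) = permPt (Equiv.swap a c) x := by
      rw [permPt_permPt_swap, permPt_swap_eq_self h, Equiv.swap_apply_left,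
        Equiv.swap_apply_of_ne_of_ne hab hca.symm]
    rw [hac, hbc, permPt_swap_eq_self h]
    ring

theorem DP_add (P : Finset (Fin n × Fin n)) (f g : SlicePoint n p → ℝ) :
    DP P (f + g) = DP P f + DP P g := by
  unfold DP
  induction P.toList with
  | nil => rfl
  | cons q l ih => rw [List.foldr_cons, ih, Dij_add, List.foldr_cons, List.foldr_cons]

theorem DP_eq_foldr {k : ℕ} {P : Finset (Fin n × Fin n)} (hP : IsTuple k P)
    {l : List (Fin n × Fin n)} (hl : P.toList.Perm l) (f : SlicePoint n p → ℝ) :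
    DP P f = l.foldr (fun q g => Dij q.1 q.2 g) f := by
  refine hl.foldr_eq' (fun q hq r hr g => ?_) f
  rw [Finset.mem_toList] at hq hr
  obtain rfl | hqr := eq_or_ne q r
  · rfl
  · obtain ⟨h₁₁, h₁₂, h₂₁, h₂₂⟩ := hP.2.2 q hq r hr hqr
    exact (Dij_comm h₁₁ h₁₂ h₂₁ h₂₂ g).symm

theorem DP_eq_DP_erase {k : ℕ} {P : Finset (Fin n × Fin n)} (hP : IsTuple k P)
    {q : Fin n × Fin n} (hq : q ∈ P) (f : SlicePoint n p → ℝ) :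
    DP P f = DP (P.erase q) (Dij q.1 q.2 f) := by
  have hperm : P.toList.Perm ((P.erase q).toList ++ [q]) := by
    have h := Finset.toList_insert (Finset.notMem_erase q P)
    rw [Finset.insert_erase hq] at h
    exact h.trans (List.perm_append_singleton q _).symm
  rw [DP_eq_foldr hP hperm, List.foldr_append]
  rfl

/-! ### Relabelling the entries of a set of pairs -/

section Relabel

variable {α : Type*} [LinearOrder α]

/-- The set `⋃P` of all entries of a set of pairs `P`. -/
def entries (P : Finset (α × α)) : Finset α :=
  P.biUnion fun q => {q.1, q.2}

/-- The image of a pair `(a, b)` under a permutation `σ` of the entries, listed again in increasing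
order. -/
def mapPair (σ : Equiv.Perm α) (q : α × α) : α × α :=
  (min (σ q.1) (σ q.2), max (σ q.1) (σ q.2))

/-- The image of a set of pairs under a permutation of the entries, each pair being listed again
in increasing order. -/
def relabel (σ : Equiv.Perm α) (P : Finset (α × α)) : Finset (α × α) :=
  P.image (mapPair σ)

theorem mem_entries {P : Finset (α × α)} {i : α} :
    i ∈ entries P ↔ ∃ q ∈ P, q.1 = i ∨ q.2 = i := by
  simp only [entries, Finset.mem_biUnion, Finset.mem_insert, Finset.mem_singleton, eq_comm]

theorem fst_mem_entries {P : Finset (α × α)} {q : α × α} (hq : q ∈ P) : q.1 ∈ entries P :=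
  mem_entries.2 ⟨q, hq, .inl rfl⟩

theorem snd_mem_entries {P : Finset (α × α)} {q : α × α} (hq : q ∈ P) : q.2 ∈ entries P :=
  mem_entries.2 ⟨q, hq, .inr rfl⟩

theorem entries_mono {P Q : Finset (α × α)} (h : P ⊆ Q) : entries P ⊆ entries Q :=
  Finset.biUnion_subset_biUnion_of_subset_left _ h

theorem card_entries_le (P : Finset (α × α)) : #(entries P) ≤ 2 * #P := by
  rw [mul_comm]
  exact Finset.card_biUnion_le_card_mul P _ 2 fun q _ => Finset.card_le_two

theorem mem_entries_relabel {σ : Equiv.Perm α} {P : Finset (α × α)} {i : α} :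
    i ∈ entries (relabel σ P) ↔ σ.symm i ∈ entries P := by
  simp only [mem_entries, relabel, Finset.exists_mem_image, Equiv.eq_symm_apply]
  refine exists_congr fun q => and_congr_right fun _ => ?_
  obtain h | h := le_total (σ q.1) (σ q.2)
  · simp only [mapPair, min_eq_left h, max_eq_right h]
  · simp only [mapPair, min_eq_right h, max_eq_left h, or_comm]

theorem entries_relabel_swap_of_mem {P : Finset (α × α)} {c d : α} (hc : c ∈ entries P)
    (hd : d ∈ entries P) : entries (relabel (Equiv.swap c d) P) = entries P := by
  ext i
  rw [mem_entries_relabel, Equiv.symm_swap, Equiv.swap_apply_def]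
  split_ifs with hic hid
  · simp only [hic, hc, hd]
  · simp only [hid, hc, hd]
  · rfl

theorem relabel_swap_eq_self {P : Finset (α × α)} {c d : α} (hlt : ∀ q ∈ P, q.1 < q.2)
    (hc : c ∉ entries P) (hd : d ∉ entries P) : relabel (Equiv.swap c d) P = P := by
  have hfix : ∀ i ∈ entries P, Equiv.swap c d i = i := fun i hi =>
    Equiv.swap_apply_of_ne_of_ne (ne_of_mem_of_not_mem hi hc) (ne_of_mem_of_not_mem hi hd)
  have hmap : ∀ q ∈ P, mapPair (Equiv.swap c d) q = q := fun q hq => by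
    rw [mapPair, hfix _ (fst_mem_entries hq), hfix _ (snd_mem_entries hq),
      min_eq_left (hlt q hq).le, max_eq_right (hlt q hq).le]
  rw [relabel, Finset.image_congr hmap, Finset.image_id']

theorem relabel_insert (σ : Equiv.Perm α) (q : α × α) (P : Finset (α × α)) :
    relabel σ (insert q P) = insert (mapPair σ q) (relabel σ P) :=
  Finset.image_insert _ _ _

end Relabel

namespace IsTuple

variable {k : ℕ} {P R : Finset (Fin n × Fin n)} {q r : Fin n × Fin n}

theorem notMem_entries (hP : IsTuple k P) (hR : R ⊆ P) (hq : q ∈ P) (hqR : q ∉ R) :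
    q.1 ∉ entries R ∧ q.2 ∉ entries R := by
  have hne : ∀ r ∈ R, q.1 ≠ r.1 ∧ q.1 ≠ r.2 ∧ q.2 ≠ r.1 ∧ q.2 ≠ r.2 := fun r hr =>
    hP.2.2 q hq r (hR hr) (ne_of_mem_of_not_mem hr hqR).symm
  simp only [mem_entries]
  grind

theorem mapPair_disjoint (hP : IsTuple k P) (σ : Equiv.Perm (Fin n)) (hq : q ∈ P) (hr : r ∈ P)
    (hqr : q ≠ r) :
    (mapPair σ q).1 ≠ (mapPair σ r).1 ∧ (mapPair σ q).1 ≠ (mapPair σ r).2 ∧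
      (mapPair σ q).2 ≠ (mapPair σ r).1 ∧ (mapPair σ q).2 ≠ (mapPair σ r).2 := by
  obtain ⟨h₁₁, h₁₂, h₂₁, h₂₂⟩ := hP.2.2 q hq r hr hqr
  have := σ.injective.ne h₁₁
  have := σ.injective.ne h₁₂
  have := σ.injective.ne h₂₁
  have := σ.injective.ne h₂₂
  simp only [mapPair, min_def, max_def]
  grind

theorem injOn_mapPair (hP : IsTuple k P) (σ : Equiv.Perm (Fin n)) : Set.InjOn (mapPair σ) P := by
  intro q hq r hr h
  by_contra hqr
  exact (hP.mapPair_disjoint σ hq hr hqr).1 (congrArg Prod.fst h)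

protected theorem relabel (hP : IsTuple k P) (σ : Equiv.Perm (Fin n)) :
    IsTuple k (relabel σ P) := by
  refine ⟨(Finset.card_image_of_injOn (hP.injOn_mapPair σ)).trans hP.1, ?_, ?_⟩
  · refine Finset.forall_mem_image.2 fun q hq => ?_
    exact min_lt_max.2 (σ.injective.ne (hP.2.1 q hq).ne)
  · refine Finset.forall_mem_image.2 fun q hq => Finset.forall_mem_image.2 fun r hr hqr => ?_
    exact hP.mapPair_disjoint σ hq hr fun h => hqr (congrArg _ h)

theorem DP_comp_permPt (hP : IsTuple k P) (f : SlicePoint n p → ℝ) (σ : Equiv.Perm (Fin n)) :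
    DP P (f ∘ permPt σ) = DP (relabel σ P) f ∘ permPt σ := by
  have hDij : ∀ (q : Fin n × Fin n) (g : SlicePoint n p → ℝ),
      Dij q.1 q.2 (g ∘ permPt σ) = Dij (mapPair σ q).1 (mapPair σ q).2 g ∘ permPt σ := by
    intro q g
    rw [Dij_comp_permPt]
    obtain h | h := le_total (σ q.1) (σ q.2)
    · rw [mapPair, min_eq_left h, max_eq_right h]
    · rw [mapPair, min_eq_right h, max_eq_left h, Dij_swap]
  have hperm : (relabel σ P).toList.Perm (P.toList.map (mapPair σ)) := by
    refine List.perm_of_nodup_nodup_toFinset_eq (Finset.nodup_toList _) ?_ ?_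
    · refine P.nodup_toList.map_on fun q hq r hr => ?_
      exact hP.injOn_mapPair σ (Finset.mem_toList.1 hq) (Finset.mem_toList.1 hr)
    · ext q
      simp only [relabel, List.mem_toFinset, Finset.mem_toList, Finset.mem_image, List.mem_map]
  rw [DP_eq_foldr (hP.relabel σ) hperm, DP]
  induction P.toList with
  | nil => rfl
  | cons q l ih => rw [List.foldr_cons, ih, hDij, List.map_cons, List.foldr_cons]

theorem sNorm_DP_le_add (hP : IsTuple k P) (hq : q ∈ P) {c : Fin n} (hc₁ : c ≠ q.1) (hc₂ : c ≠ q.2)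
    (f : SlicePoint n p → ℝ) :
    sNorm (DP P f) ≤ sNorm (DP (relabel (Equiv.swap q.2 c) P) f) +
      sNorm (DP (relabel (Equiv.swap q.1 c) P) f) := by
  have hDP : DP P f = DP P (f ∘ permPt (Equiv.swap q.2 c)) +
      DP P (f ∘ permPt (Equiv.swap q.1 c)) := by
    simp only [DP_eq_DP_erase hP hq]
    rw [← DP_add, ← Dij_eq_add (hP.2.1 q hq).ne hc₁ hc₂]
  rw [hDP, hP.DP_comp_permPt, hP.DP_comp_permPt]
  refine (sNorm_add_le _ _).trans_eq ?_
  rw [sNorm_comp_permPt, sNorm_comp_permPt]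

end IsTuple

/-! ### The potential of a tuple -/

section Entanglement

variable {α : Type*} [LinearOrder α]

/-- The contribution of the ordered pair of arcs `(q, r)` to the entanglement: `2` if `r` is nested
inside `q`, `1` if `q` crosses `r` from the left, and `0` otherwise. -/
def arcWeight (q r : α × α) : ℕ :=
  if q.1 < r.1 ∧ r.1 < q.2 then if r.2 < q.2 then 2 else 1 else 0

/-- The symmetrised arc weight: `2` for nested arcs, `1` for crossing arcs and `0` for disjoint
ones. -/
def linking (q r : α × α) : ℕ :=
  arcWeight q r + arcWeight r q

/-- The number of crossings plus twice the number of nestings among the pairs in `P`, seen as arcs.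
Nestings are the obstruction to being sorted; crossings have to be counted too, since replacing
nested pairs by disjoint ones may turn other crossings into nestings. -/
def entanglement (P : Finset (α × α)) : ℕ :=
  ∑ q ∈ P, ∑ r ∈ P, arcWeight q r

theorem linking_le_two (q r : α × α) : linking q r ≤ 2 := by
  simp only [linking, arcWeight]
  grind

theorem linking_nested {w x y z : α} (hwx : w < x) (hxy : x < y) (hyz : y < z) :
    linking (w, z) (x, y) = 2 := by
  simp only [linking, arcWeight]
  grind

theorem linking_crossing {w x y z : α} (hwx : w < x) (hxy : x < y) (hyz : y < z) :
    linking (w, y) (x, z) = 1 := by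
  simp only [linking, arcWeight]
  grind

theorem linking_disjoint {w x y z : α} (hwx : w < x) (hxy : x < y) :
    linking (w, x) (y, z) = 0 := by
  simp only [linking, arcWeight]
  grind

theorem linking_crossing_le_nested {w x y z : α} (hwx : w < x) (hxy : x < y) (hyz : y < z)
    (r : α × α) :
    linking (w, y) r + linking (x, z) r ≤ linking (w, z) r + linking (x, y) r := by
  simp only [linking, arcWeight]
  grind

theorem linking_disjoint_le_nested {w x y z : α} (hwx : w < x) (hxy : x < y) (hyz : y < z)
    {r : α × α} (hrx : r.1 ≠ x) :
    linking (w, x) r + linking (y, z) r ≤ linking (w, z) r + linking (x, y) r := by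
  simp only [linking, arcWeight]
  grind

theorem entanglement_le (P : Finset (α × α)) : entanglement P ≤ 2 * #P ^ 2 :=
  calc entanglement P ≤ ∑ q ∈ P, ∑ r ∈ P, 2 :=
        Finset.sum_le_sum fun q _ => Finset.sum_le_sum fun r _ =>
          (Nat.le_add_right _ _).trans (linking_le_two q r)
    _ = 2 * #P ^ 2 := by
        simp only [Finset.sum_const, smul_eq_mul]
        ring

theorem entanglement_insert {q : α × α} {R : Finset (α × α)} (hq : q ∉ R) :
    entanglement (insert q R) = entanglement R + ∑ r ∈ R, linking q r := by
  have hself : arcWeight q q = 0 := if_neg fun h => lt_irrefl _ h.1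
  simp only [entanglement, linking, Finset.sum_insert hq, Finset.sum_add_distrib, hself]
  ring

theorem entanglement_insert_le (q : α × α) (R : Finset (α × α)) :
    entanglement (insert q R) ≤ entanglement R + ∑ r ∈ R, linking q r := by
  by_cases hq : q ∈ R
  · rw [Finset.insert_eq_of_mem hq]
    exact Nat.le_add_right _ _
  · exact (entanglement_insert hq).le

theorem entanglement_insert_insert_lt {q r q' r' : α × α} {R : Finset (α × α)}
    (hq : q ∉ insert r R) (hr : r ∉ R) (hlt : linking q' r' < linking q r)
    (hle : ∀ s ∈ R, linking q' s + linking r' s ≤ linking q s + linking r s) :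
    entanglement (insert q' (insert r' R)) < entanglement (insert q (insert r R)) := by
  have hsum : ∑ s ∈ R, linking q' s + ∑ s ∈ R, linking r' s ≤
      ∑ s ∈ R, linking q s + ∑ s ∈ R, linking r s := by
    simpa only [Finset.sum_add_distrib] using Finset.sum_le_sum hle
  have hinsert : ∑ s ∈ insert r' R, linking q' s ≤ linking q' r' + ∑ s ∈ R, linking q' s := by
    by_cases hr'R : r' ∈ R
    · rw [Finset.insert_eq_of_mem hr'R]
      exact Nat.le_add_left _ _
    · exact (Finset.sum_insert hr'R).le
  have hq' := entanglement_insert_le q' (insert r' R)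
  have hr' := entanglement_insert_le r' R
  rw [entanglement_insert hq, entanglement_insert hr, Finset.sum_insert hr]
  omega

theorem entanglement_insert_lt_add (q q' : α × α) {R : Finset (α × α)} (hq : q ∉ R) :
    entanglement (insert q' R) < entanglement (insert q R) + 2 * #(insert q R) := by
  have hsum : ∑ r ∈ R, linking q' r ≤ #R * 2 :=
    Finset.sum_le_card_nsmul R _ 2 fun r _ => linking_le_two q' r
  have hinsert := entanglement_insert_le q' R
  rw [entanglement_insert hq, Finset.card_insert_of_notMem hq]
  omega

theorem entanglement_relabel_crossing_lt {w x y z : α} (hwx : w < x) (hxy : x < y) (hyz : y < z)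
    {R : Finset (α × α)} (hR : ∀ r ∈ R, r.1 < r.2) (hy : y ∉ entries R) (hz : z ∉ entries R) :
    entanglement (relabel (Equiv.swap y z) (insert (w, z) (insert (x, y) R))) <
      entanglement (insert (w, z) (insert (x, y) R)) := by
  have hcross : relabel (Equiv.swap y z) (insert (w, z) (insert (x, y) R)) =
      insert (w, y) (insert (x, z) R) := by
    simp only [relabel_insert, relabel_swap_eq_self hR hy hz, mapPair, Equiv.swap_apply_left,
      Equiv.swap_apply_right, Equiv.swap_apply_of_ne_of_ne (hwx.trans hxy).ne
      ((hwx.trans hxy).trans hyz).ne, Equiv.swap_apply_of_ne_of_ne hxy.ne (hxy.trans hyz).ne]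
    rw [min_eq_left (hwx.trans hxy).le, max_eq_right (hwx.trans hxy).le,
      min_eq_left (hxy.trans hyz).le, max_eq_right (hxy.trans hyz).le]
  rw [hcross]
  refine entanglement_insert_insert_lt ?_ (fun h => hy (snd_mem_entries h)) ?_ fun r _ => ?_
  · simp only [Finset.mem_insert, Prod.mk.injEq, hwx.ne, false_and, false_or]
    exact fun h => hz (snd_mem_entries h)
  · rw [linking_crossing hwx hxy hyz, linking_nested hwx hxy hyz]
    exact Nat.one_lt_two
  · exact linking_crossing_le_nested hwx hxy hyz r

theorem entanglement_relabel_disjoint_lt {w x y z : α} (hwx : w < x) (hxy : x < y) (hyz : y < z)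
    {R : Finset (α × α)} (hR : ∀ r ∈ R, r.1 < r.2) (hx : x ∉ entries R) (hz : z ∉ entries R) :
    entanglement (relabel (Equiv.swap x z) (insert (w, z) (insert (x, y) R))) <
      entanglement (insert (w, z) (insert (x, y) R)) := by
  have hdisj : relabel (Equiv.swap x z) (insert (w, z) (insert (x, y) R)) =
      insert (w, x) (insert (y, z) R) := by
    simp only [relabel_insert, relabel_swap_eq_self hR hx hz, mapPair, Equiv.swap_apply_left,
      Equiv.swap_apply_right, Equiv.swap_apply_of_ne_of_ne hwx.ne
      ((hwx.trans hxy).trans hyz).ne, Equiv.swap_apply_of_ne_of_ne hxy.ne' hyz.ne]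
    rw [min_eq_left hwx.le, max_eq_right hwx.le, min_eq_right hyz.le, max_eq_left hyz.le]
  rw [hdisj]
  refine entanglement_insert_insert_lt ?_ (fun h => hx (fst_mem_entries h)) ?_ fun r hr => ?_
  · simp only [Finset.mem_insert, Prod.mk.injEq, hwx.ne, false_and, false_or]
    exact fun h => hz (snd_mem_entries h)
  · rw [linking_disjoint hwx hxy, linking_nested hwx hxy hyz]
    exact Nat.two_pos
  · exact linking_disjoint_le_nested hwx hxy hyz (ne_of_mem_of_not_mem (fst_mem_entries hr) hx)

end Entanglement

/-- The indices `j` all of whose predecessors, including `j` itself, are entries of `P`. They form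
an initial segment, whose length measures how far `P` is from being shifted. -/
def initialEntries (P : Finset (Fin n × Fin n)) : Finset (Fin n) :=
  {j | ∀ i ≤ j, i ∈ entries P}

/-- The quantity that decreases at every reduction step. The weight of the second summand exceeds
any increase of the entanglement caused by changing one pair. -/
def potential (P : Finset (Fin n × Fin n)) : ℕ :=
  entanglement P + 2 * #P * (2 * #P - #(initialEntries P))

theorem potential_le (P : Finset (Fin n × Fin n)) : potential P ≤ 6 * #P ^ 2 :=
  calc potential P ≤ 2 * #P ^ 2 + 2 * #P * (2 * #P) :=
        Nat.add_le_add (entanglement_le P) (Nat.mul_le_mul_left _ (Nat.sub_le _ _))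
    _ = 6 * #P ^ 2 := by ring

theorem card_initialEntries_le (P : Finset (Fin n × Fin n)) : #(initialEntries P) ≤ 2 * #P := by
  have hsub : initialEntries P ⊆ entries P := fun j hj => (Finset.mem_filter.1 hj).2 j le_rfl
  exact (Finset.card_le_card hsub).trans (card_entries_le P)

theorem card_initialEntries_lt {P Q : Finset (Fin n × Fin n)} {c : Fin n} (hcP : c ∉ entries P)
    (hcQ : ∀ i ≤ c, i ∈ entries Q) : #(initialEntries P) < #(initialEntries Q) := by
  refine Finset.card_lt_card (Finset.ssubset_iff_of_subset ?_ |>.2 ⟨c, ?_, ?_⟩)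
  · simp only [initialEntries, Finset.subset_iff, Finset.mem_filter_univ]
    intro j hj i hij
    have hjc : j < c := lt_of_not_ge fun hcj => hcP (hj c hcj)
    exact hcQ i (hij.trans hjc.le)
  · simpa only [initialEntries, Finset.mem_filter_univ] using hcQ
  · simp only [initialEntries, Finset.mem_filter_univ]
    exact fun h => hcP (h c le_rfl)

theorem exists_least_gap {P : Finset (Fin n × Fin n)} (hs : ¬ IsShifted P) :
    ∃ q ∈ P, ∃ c, c < q.1 ∧ c ∉ entries P ∧ ∀ i < c, i ∈ entries P := by
  simp only [IsShifted, ← mem_entries, not_forall] at hs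
  obtain ⟨q, hq, a, haq, ha⟩ := hs
  obtain ⟨c, hca, hc⟩ := exists_minimal_le_of_wellFoundedLT (· ∉ entries P) a ha
  have hcq : c ≠ q.1 := (ne_of_mem_of_not_mem (fst_mem_entries hq) hc.prop).symm
  exact ⟨q, hq, c, (hca.trans haq).lt_of_ne hcq, hc.prop,
    fun i hic => not_not.1 (hc.not_prop_of_lt hic)⟩

namespace IsTuple

variable {k : ℕ} {P : Finset (Fin n × Fin n)}

theorem exists_nested (hP : IsTuple k P) (hs : ¬ IsSorted P) :
    ∃ q ∈ P, ∃ r ∈ P, q.1 < r.1 ∧ r.2 < q.2 := by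
  by_contra! hnest
  refine hs fun q hq r hr => ?_
  obtain rfl | hqr := eq_or_ne q r
  · simp only [lt_self_iff_false]
  · obtain ⟨h₁, -, -, h₂⟩ := hP.2.2 q hq r hr hqr
    have := hnest q hq r hr
    have := hnest r hr q hq
    grind

theorem card_relabel (hP : IsTuple k P) (σ : Equiv.Perm (Fin n)) : #(relabel σ P) = #P :=
  (hP.relabel σ).1.trans hP.1.symm

theorem potential_relabel_swap_lt_of_mem (hP : IsTuple k P) {c d : Fin n} (hc : c ∈ entries P)
    (hd : d ∈ entries P) (hlt : entanglement (relabel (Equiv.swap c d) P) < entanglement P) :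
    potential (relabel (Equiv.swap c d) P) < potential P := by
  unfold potential initialEntries
  rw [hP.card_relabel, entries_relabel_swap_of_mem hc hd]
  exact Nat.add_lt_add_right hlt _

theorem potential_relabel_swap_lt_of_nested (hP : IsTuple k P) {w x y z : Fin n}
    (hwz : (w, z) ∈ P) (hxy : (x, y) ∈ P) (hwx : w < x) (hyz : y < z) :
    potential (relabel (Equiv.swap y z) P) < potential P ∧
      potential (relabel (Equiv.swap x z) P) < potential P := by
  set R := (P.erase (w, z)).erase (x, y) with hR
  have hne : (x, y) ≠ (w, z) := fun h => hwx.ne' (congrArg Prod.fst h)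
  have hPR : P = insert (w, z) (insert (x, y) R) := by
    rw [hR, Finset.insert_erase (Finset.mem_erase.2 ⟨hne, hxy⟩), Finset.insert_erase hwz]
  have hRP : R ⊆ P := (Finset.erase_subset _ _).trans (Finset.erase_subset _ _)
  have hRlt : ∀ r ∈ R, r.1 < r.2 := fun r hr => hP.2.1 r (hRP hr)
  obtain ⟨hx, hy⟩ := hP.notMem_entries hRP hxy (Finset.notMem_erase _ _)
  have hz := (hP.notMem_entries hRP hwz fun h =>
    Finset.notMem_erase _ _ (Finset.mem_of_mem_erase h)).2
  have hx_lt_y : x < y := hP.2.1 _ hxy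
  constructor
  · refine hP.potential_relabel_swap_lt_of_mem (snd_mem_entries hxy) (snd_mem_entries hwz) ?_
    rw [hPR]
    exact entanglement_relabel_crossing_lt hwx hx_lt_y hyz hRlt hy hz
  · refine hP.potential_relabel_swap_lt_of_mem (fst_mem_entries hxy) (snd_mem_entries hwz) ?_
    rw [hPR]
    exact entanglement_relabel_disjoint_lt hwx hx_lt_y hyz hRlt hx hz

theorem potential_relabel_swap_lt_of_gap (hP : IsTuple k P) {q : Fin n × Fin n} (hq : q ∈ P)
    {c d : Fin n} (hd : d = q.1 ∨ d = q.2) (hcd : c < d) (hc : c ∉ entries P)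
    (hlt : ∀ i < c, i ∈ entries P) : potential (relabel (Equiv.swap d c) P) < potential P := by
  have hdP : d ∈ entries P := mem_entries.2 ⟨q, hq, hd.imp Eq.symm Eq.symm⟩
  have hentries : ∀ i ≤ c, i ∈ entries (relabel (Equiv.swap d c) P) := by
    intro i hic
    rw [mem_entries_relabel, Equiv.symm_swap]
    obtain rfl | hic := hic.eq_or_lt
    · rwa [Equiv.swap_apply_right]
    · rw [Equiv.swap_apply_of_ne_of_ne (hic.trans hcd).ne hic.ne]
      exact hlt i hic
  have hinit := card_initialEntries_lt hc hentries
  have hinit_le := card_initialEntries_le (relabel (Equiv.swap d c) P)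
  rw [hP.card_relabel] at hinit_le
  have hent : entanglement (relabel (Equiv.swap d c) P) < entanglement P + 2 * #P := by
    have hRP := Finset.erase_subset q P
    have hqR := Finset.notMem_erase q P
    have hdR : d ∉ entries (P.erase q) := by
      obtain ⟨h₁, h₂⟩ := hP.notMem_entries hRP hq hqR
      rcases hd with rfl | rfl <;> assumption
    have hfix : relabel (Equiv.swap d c) (P.erase q) = P.erase q :=
      relabel_swap_eq_self (fun r hr => hP.2.1 r (hRP hr)) hdR fun h => hc (entries_mono hRP h)
    have hrelabel : relabel (Equiv.swap d c) P =
        insert (mapPair (Equiv.swap d c) q) (P.erase q) := by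
      conv_lhs => rw [← Finset.insert_erase hq, relabel_insert, hfix]
    have h := entanglement_insert_lt_add q (mapPair (Equiv.swap d c) q) hqR
    rwa [← hrelabel, Finset.insert_erase hq] at h
  calc potential (relabel (Equiv.swap d c) P)
      < entanglement P + 2 * #P +
          2 * #P * (2 * #P - #(initialEntries (relabel (Equiv.swap d c) P))) := by
        rw [potential, hP.card_relabel]
        exact Nat.add_lt_add_right hent _
    _ = entanglement P +
          2 * #P * (2 * #P - #(initialEntries (relabel (Equiv.swap d c) P)) + 1) := by
        ring
    _ ≤ potential P := Nat.add_le_add_left (Nat.mul_le_mul_left _ (by omega)) _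

theorem exists_pivot (hP : IsTuple k P) (hs : ¬ (IsShifted P ∧ IsSorted P)) :
    ∃ q ∈ P, ∃ c, c ≠ q.1 ∧ c ≠ q.2 ∧
      potential (relabel (Equiv.swap q.2 c) P) < potential P ∧
      potential (relabel (Equiv.swap q.1 c) P) < potential P := by
  by_cases hshift : IsShifted P
  · obtain ⟨q, hq, r, hr, h₁, h₂⟩ := hP.exists_nested fun hsort => hs ⟨hshift, hsort⟩
    exact ⟨r, hr, q.2, ((hP.2.1 r hr).trans h₂).ne', h₂.ne',
      hP.potential_relabel_swap_lt_of_nested hq hr h₁ h₂⟩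
  · obtain ⟨q, hq, c, hcq, hc, hlt⟩ := exists_least_gap hshift
    have hcq' : c < q.2 := hcq.trans (hP.2.1 q hq)
    exact ⟨q, hq, c, hcq.ne, hcq'.ne,
      hP.potential_relabel_swap_lt_of_gap hq (.inr rfl) hcq' hc hlt,
      hP.potential_relabel_swap_lt_of_gap hq (.inl rfl) hcq hc hlt⟩

theorem exists_split (hP : IsTuple k P) (hs : ¬ (IsShifted P ∧ IsSorted P))
    (f : SlicePoint n p → ℝ) :
    ∃ Q, IsTuple k Q ∧ ∃ R, IsTuple k R ∧ potential Q < potential P ∧ potential R < potential P ∧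
      sNorm (DP P f) ≤ sNorm (DP Q f) + sNorm (DP R f) := by
  obtain ⟨q, hq, c, hc₁, hc₂, hlt₁, hlt₂⟩ := hP.exists_pivot hs
  exact ⟨_, hP.relabel _, _, hP.relabel _, hlt₁, hlt₂, hP.sNorm_DP_le_add hq hc₁ hc₂ f⟩

end IsTuple

/-! ### Subadditive descent -/

section Descent

variable {ι : Type*} {S T : Set ι} {μ : ι → ℕ} {v : ι → ℝ} {ε : ℝ}

theorem le_two_pow_mul_of_split (hv : ∀ i, 0 ≤ v i) (hT : ∀ i ∈ S, i ∈ T → v i ≤ ε)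
    (hsplit : ∀ i ∈ S, i ∉ T → ∃ j ∈ S, ∃ l ∈ S, μ j < μ i ∧ μ l < μ i ∧ v i ≤ v j + v l)
    (N : ℕ) {i : ι} (hi : i ∈ S) (hN : μ i ≤ N) : v i ≤ 2 ^ N * ε := by
  induction N generalizing i with
  | zero =>
    by_cases hiT : i ∈ T
    · simpa only [pow_zero, one_mul] using hT i hi hiT
    · obtain ⟨j, -, l, -, hj, -, -⟩ := hsplit i hi hiT
      omega
  | succ N ih =>
    by_cases hiT : i ∈ T
    · have hε : 0 ≤ ε := (hv i).trans (hT i hi hiT)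
      exact (hT i hi hiT).trans (le_mul_of_one_le_left hε (one_le_pow₀ one_le_two))
    · obtain ⟨j, hjS, l, hlS, hj, hl, hle⟩ := hsplit i hi hiT
      calc v i ≤ v j + v l := hle
        _ ≤ 2 ^ N * ε + 2 ^ N * ε := add_le_add (ih hjS (by omega)) (ih hlS (by omega))
        _ = 2 ^ (N + 1) * ε := by ring

theorem le_of_split_of_gap (hT : ∀ i ∈ S, i ∈ T → v i ≤ ε)
    (hsplit : ∀ i ∈ S, i ∉ T → ∃ j ∈ S, ∃ l ∈ S, μ j < μ i ∧ μ l < μ i ∧ v i ≤ v j + v l)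
    (hgap : ∀ i ∈ S, v i ≤ 2 * ε → v i ≤ ε) {i : ι} (hi : i ∈ S) : v i ≤ ε := by
  induction hμ : μ i using Nat.strong_induction_on generalizing i with
  | _ m ih =>
    by_cases hiT : i ∈ T
    · exact hT i hi hiT
    · obtain ⟨j, hjS, l, hlS, hj, hl, hle⟩ := hsplit i hi hiT
      subst hμ
      have hvj := ih _ hj hjS rfl
      have hvl := ih _ hl hlS rfl
      exact hgap i hi (by linarith)

end Descent

/-- Suppose `‖D_{P'} f‖₂ ≤ ε` for every shifted sorted `k`-tuple `P'`. Then: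
(1) `‖D_P f‖₂ ≤ 2^{10 k²} ε` for every `k`-tuple `P`;
(2) if, moreover, every `k`-tuple `P` has `‖D_P f‖₂ ≤ ε` or `‖D_P f‖₂ > 3 ε`, then
every `k`-tuple `P` has `‖D_P f‖₂ ≤ ε`. -/
theorem derivative_generating_set (n : ℕ) (p : ℝ) (hp : 0 < p) (hp1 : p ≤ 1)
    (hpn : ∃ m : ℤ, (m : ℝ) = p * n) (k : ℕ) (hk : 1 ≤ k)
    (f : SlicePoint n p → ℝ) (ε : ℝ)
    (h : ∀ P' : Finset (Fin n × Fin n), IsTuple k P' → IsShifted P' → IsSorted P' →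
      sNorm (DP P' f) ≤ ε) :
    (∀ P : Finset (Fin n × Fin n), IsTuple k P →
      sNorm (DP P f) ≤ (2 : ℝ) ^ (10 * k ^ 2) * ε) ∧
    ((∀ P : Finset (Fin n × Fin n), IsTuple k P →
        sNorm (DP P f) ≤ ε ∨ sNorm (DP P f) > 3 * ε) →
      ∀ P : Finset (Fin n × Fin n), IsTuple k P → sNorm (DP P f) ≤ ε) := by
  let tuples : Set (Finset (Fin n × Fin n)) := {P | IsTuple k P}
  let good : Set (Finset (Fin n × Fin n)) := {P | IsShifted P ∧ IsSorted P}
  have hgood : ∀ P ∈ tuples, P ∈ good → sNorm (DP P f) ≤ ε := fun P hP hs => h P hP hs.1 hs.2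
  have hsplit : ∀ P ∈ tuples, P ∉ good → ∃ Q ∈ tuples, ∃ R ∈ tuples,
      potential Q < potential P ∧ potential R < potential P ∧
        sNorm (DP P f) ≤ sNorm (DP Q f) + sNorm (DP R f) :=
    fun P hP hs => IsTuple.exists_split hP hs f
  refine ⟨fun P hP => ?_, fun hgap P hP => ?_⟩
  · have hpot : potential P ≤ 10 * k ^ 2 := by
      have := hP.1 ▸ potential_le P
      omega
    exact le_two_pow_mul_of_split (fun P => sNorm_nonneg (DP P f)) hgood hsplit _ hP hpot
  · refine le_of_split_of_gap hgood hsplit (fun Q hQ hQε => ?_) hP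
    have hnonneg := sNorm_nonneg (DP Q f)
    exact (hgap Q hQ).resolve_right (by linarith)
end
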